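/- Let (h_i, p_i) be a contracting-on-average iterated function system on ℝ^d as above, with unique invariant probability measure ν. Assume in addition that each h_i is conformal and that the system satisfies the strong open set condition. Then the Hausdorff dimension of ν exists and equals s = (∫ ∑_i p_i(x) log p_i(x) dν(x)) / (∫ ∑_i p_i(x) log h_i'(x) dν(x)). -/

import Mathlib

/-!
Each iteration of the system multiplies distances by about `hᵢ'(x)` and `ν`-mass by about `pᵢ(x)`.
Under the strong open set condition the images of the support of `ν` are pairwise separated, so on
the support the last map applied can be read off from the point: `ν`-almost everywhere there is a
left inverse `T` with `T (hᵢ x) = x`, which preserves `ν`. Contraction on average becomes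
contraction in mean for a small power of the metric; hence the iterates of the transfer operator
converge on Lipschitz functions, and this makes `(T, ν)` ergodic. By the ergodic theorem the
logarithms of the radius and of the mass of a small ball carried along the orbit grow at the
rates `-∫ ∑ pᵢ log hᵢ'` and `-∫ ∑ pᵢ log pᵢ`. The local dimension of `ν` is therefore their quotient
`ν`-almost everywhere, and the mass distribution principle and a covering argument transfer it to
the Hausdorff dimension. Since the maps are only assumed to be conformal with bounded logarithmic
derivative, their injectivity comes from Hadamard's global inverse function theorem.
-/

open MeasureTheory Metric Filter ENNReal NNReal

noncomputable section

/-- The upper Hausdorff dimension of a measure: the infimum of the Hausdorff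
dimensions of sets of full measure. -/
def upperDimH {X : Type*} [EMetricSpace X] [MeasurableSpace X]
    (μ : Measure X) : ℝ≥0∞ :=
  ⨅ (s : Set X) (_ : μ sᶜ = 0), dimH s

/-- The lower Hausdorff dimension of a measure: the infimum of the Hausdorff
dimensions of sets of positive measure. -/
def lowerDimH {X : Type*} [EMetricSpace X] [MeasurableSpace X]
    (μ : Measure X) : ℝ≥0∞ :=
  ⨅ (s : Set X) (_ : 0 < μ s), dimH s

open scoped Topology

section GlobalInverse

open Set

variable {X Y : Type*} [TopologicalSpace X]

/-- On the set `J` of times, `γ` is a lift of the curve `c` through `h`, starting at `x`. -/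
structure IsLiftOn (h : X → Y) (c : ℝ → Y) (x : X) (γ : ℝ → X) (J : Set ℝ) : Prop where
  continuousOn : ContinuousOn γ J
  map_eq : ∀ s ∈ J, h (γ s) = c s
  start : γ 0 = x

namespace IsLiftOn

variable {h : X → Y} {c : ℝ → Y} {x : X} {γ γ' : ℝ → X} {J J' : Set ℝ} {t : ℝ}

theorem mono (hγ : IsLiftOn h c x γ J) (hJ : J' ⊆ J) : IsLiftOn h c x γ J' :=
  ⟨hγ.continuousOn.mono hJ, fun s hs => hγ.map_eq s (hJ hs), hγ.start⟩

variable [TopologicalSpace Y]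

theorem eqOn [T2Space X] (hh : IsLocalHomeomorph h) (hγ : IsLiftOn h c x γ J)
    (hγ' : IsLiftOn h c x γ' J) (hJ : IsPreconnected J) (h0 : 0 ∈ J) : EqOn γ γ' J :=
  (T2Space.isSeparatedMap h).eqOn_of_comp_eqOn hh.isLocallyInjective hJ hγ.continuousOn
    hγ'.continuousOn (fun s hs => (hγ.map_eq s hs).trans (hγ'.map_eq s hs).symm) h0
    (hγ.start.trans hγ'.start.symm)

theorem exists_Ico [T2Space X] (hh : IsLocalHomeomorph h) (ht : 0 < t)
    (H : ∀ s < t, ∃ γ, IsLiftOn h c x γ (Icc 0 s)) : ∃ γ, IsLiftOn h c x γ (Ico 0 t) := by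
  have : Nonempty (ℝ → X) := ⟨fun _ => x⟩
  choose! γ hγ using H
  have agree : ∀ u < t, ∀ s ∈ Icc 0 u, γ s s = γ u s := fun u hu s hs =>
    (hγ s (hs.2.trans_lt hu)).eqOn hh ((hγ u hu).mono (Icc_subset_Icc_right hs.2))
      isPreconnected_Icc ⟨le_rfl, hs.1⟩ ⟨hs.1, le_rfl⟩
  refine ⟨fun s => γ s s, fun s hs => ?_, fun s hs => (hγ s hs.2).map_eq s ⟨hs.1, le_rfl⟩,
    (hγ 0 ht).start⟩
  obtain ⟨u, hsu, hut⟩ := exists_between hs.2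
  have hcont : ContinuousWithinAt (fun s => γ s s) (Icc 0 u) s :=
    ((hγ u hut).continuousOn s ⟨hs.1, hsu.le⟩).congr (agree u hut) (agree u hut s ⟨hs.1, hsu.le⟩)
  refine hcont.mono_of_mem_nhdsWithin ?_
  filter_upwards [mem_nhdsWithin_of_mem_nhds (Iio_mem_nhds hsu), self_mem_nhdsWithin]
    with v hvu hv using ⟨hv.1, hvu.le⟩

theorem exists_Icc_of_tendsto [T2Space Y] (hh : Continuous h) (hc : Continuous c) (ht : 0 < t)
    (hγ : IsLiftOn h c x γ (Ico 0 t)) {y : X} (hy : Tendsto γ (𝓝[Ico 0 t] t) (𝓝 y)) :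
    ∃ γ, IsLiftOn h c x γ (Icc 0 t) := by
  have hdiff : Icc 0 t \ {t} = Ico 0 t := Icc_sdiff_right
  have : (𝓝[Ico 0 t] t).NeBot := mem_closure_iff_nhdsWithin_neBot.1 <| by
    rw [closure_Ico ht.ne]
    exact right_mem_Icc.2 ht.le
  have hyt : h y = c t := tendsto_nhds_unique ((hh.tendsto y).comp hy) <|
    ((hc.tendsto t).mono_left nhdsWithin_le_nhds).congr' <|
      eventually_nhdsWithin_of_forall fun s hs => (hγ.map_eq s hs).symm
  refine ⟨Function.update γ t y, ?_, fun s hs => ?_, ?_⟩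
  · rw [continuousOn_update_iff, hdiff]
    exact ⟨hγ.continuousOn, fun _ => hy⟩
  · rcases eq_or_ne s t with rfl | hst
    · rw [Function.update_self, hyt]
    · rw [Function.update_of_ne hst, hγ.map_eq s ⟨hs.1, hs.2.lt_of_ne hst⟩]
  · rw [Function.update_of_ne ht.ne, hγ.start]

theorem exists_extension (hh : IsLocalHomeomorph h) (hc : Continuous c) (ht : 0 ≤ t)
    (hγ : IsLiftOn h c x γ (Icc 0 t)) {u : ℝ} (htu : t < u) :
    ∃ s ∈ Ioc t u, ∃ γ, IsLiftOn h c x γ (Icc 0 s) := by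
  obtain ⟨e, hes, rfl⟩ := hh (γ t)
  have hct : c t = e (γ t) := (hγ.map_eq t ⟨ht, le_rfl⟩).symm
  have htarget : ∀ᶠ s in 𝓝[>] t, Icc t s ⊆ c ⁻¹' e.target := by
    have htc : c t ∈ e.target := hct ▸ e.map_source hes
    obtain ⟨δ, hδ, hball⟩ :=
      Metric.mem_nhds_iff.1 (hc.continuousAt.preimage_mem_nhds (e.open_target.mem_nhds htc))
    filter_upwards [Ioo_mem_nhdsGT (show t < t + δ by linarith)] with s hs v hv
    refine hball (mem_ball.2 ?_)
    rw [Real.dist_eq, abs_of_nonneg (sub_nonneg.2 hv.1)]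
    linarith [hv.2, hs.2]
  obtain ⟨s, hs, hsu⟩ := (htarget.and (Ioc_mem_nhdsGT htu)).exists
  set γ' : ℝ → X := fun v => if v ≤ t then γ v else e.symm (c v)
  have left_eq : EqOn γ' γ (Icc 0 t) := fun v hv => if_pos hv.2
  have right_eq : EqOn γ' (fun v => e.symm (c v)) (Icc t s) := fun v hv => by
    rcases hv.1.eq_or_lt with rfl | htv
    · simp only [left_eq ⟨ht, le_rfl⟩, hct, e.left_inv hes]
    · exact if_neg htv.not_ge
  refine ⟨s, hsu, γ', ?_, fun v hv => ?_, ?_⟩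
  · rw [← Icc_union_Icc_eq_Icc ht hsu.1.le]
    exact (hγ.continuousOn.congr left_eq).union_of_isClosed
      ((e.continuousOn_symm.comp hc.continuousOn hs).congr right_eq) isClosed_Icc isClosed_Icc
  · rcases le_total v t with hvt | hvt
    · rw [left_eq ⟨hv.1, hvt⟩, hγ.map_eq v ⟨hv.1, hvt⟩]
    · rw [right_eq ⟨hvt, hv.2⟩, e.right_inv (hs ⟨hvt, hv.2⟩)]
  · rw [left_eq ⟨le_rfl, ht⟩, hγ.start]

theorem exists_Icc_zero_one [T2Space X] [T2Space Y] (hh : IsLocalHomeomorph h) (hc : Continuous c)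
    (h0 : h x = c 0) (H : ∀ t ∈ Ioc (0 : ℝ) 1, ∀ γ, IsLiftOn h c x γ (Ico 0 t) →
      ∃ y, Tendsto γ (𝓝[Ico 0 t] t) (𝓝 y)) : ∃ γ, IsLiftOn h c x γ (Icc 0 1) := by
  set S : Set ℝ := {t | ∃ γ, IsLiftOn h c x γ (Icc 0 t)}
  have lower : ∀ t ∈ S, ∀ s ≤ t, s ∈ S := fun t ⟨γ, hγ⟩ s hs =>
    ⟨γ, hγ.mono (Icc_subset_Icc_right hs)⟩
  have zero_mem : (0 : ℝ) ∈ S := by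
    refine ⟨fun _ => x, continuousOn_const, fun s hs => ?_, rfl⟩
    rw [h0, le_antisymm hs.1 hs.2]
  have closed : IsClosed (S ∩ Icc 0 1) := by
    refine isClosed_of_closure_subset fun t ht => ?_
    have htI : t ∈ Icc (0 : ℝ) 1 := closure_minimal inter_subset_right isClosed_Icc ht
    refine ⟨?_, htI⟩
    rcases htI.1.eq_or_lt with rfl | ht0
    · exact zero_mem
    have below : ∀ s < t, s ∈ S := fun s hs => by
      obtain ⟨u, hsu, hu⟩ := mem_closure_iff.1 ht (Ioi s) isOpen_Ioi hs
      exact lower u hu.1 s (le_of_lt hsu)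
    obtain ⟨γ, hγ⟩ := exists_Ico hh ht0 below
    obtain ⟨y, hy⟩ := H t ⟨ht0, htI.2⟩ γ hγ
    exact hγ.exists_Icc_of_tendsto hh.continuous hc ht0 hy
  refine closed.Icc_subset_of_forall_exists_gt zero_mem ?_ (right_mem_Icc.2 zero_le_one)
  rintro t ⟨⟨γ, hγ⟩, ht⟩ u hu
  obtain ⟨s, hs, hsS⟩ := hγ.exists_extension hh hc ht.1 hu
  exact ⟨s, hsS, hs⟩

end IsLiftOn

variable {E F : Type*} [NormedAddCommGroup E] [NormedSpace ℝ E] [CompleteSpace E]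
  [NormedAddCommGroup F] [NormedSpace ℝ F] {h : E → F} {e : E → E ≃L[ℝ] F}

theorem isLocalHomeomorph_of_hasStrictFDerivAt
    (he : ∀ x, HasStrictFDerivAt h (e x : E →L[ℝ] F) x) : IsLocalHomeomorph h := fun x =>
  ⟨(he x).toOpenPartialHomeomorph h, (he x).mem_toOpenPartialHomeomorph_source, rfl⟩

theorem IsLiftOn.hasDerivWithinAt (he : ∀ x, HasStrictFDerivAt h (e x : E →L[ℝ] F) x) {c : ℝ → F}
    {x : E} {γ : ℝ → E} {J : Set ℝ} (hγ : IsLiftOn h c x γ J) {s : ℝ} (hs : s ∈ J) {w : F}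
    (hc : HasDerivWithinAt c w J s) : HasDerivWithinAt γ ((e (γ s)).symm w) J s := by
  set g := (he (γ s)).localInverse h (e (γ s)) (γ s)
  have hg_left : ∀ᶠ y in 𝓝 (γ s), g (h y) = y := (he (γ s)).eventually_left_inverse
  have hg_deriv : HasFDerivAt g ((e (γ s)).symm : F →L[ℝ] E) (c s) := by
    rw [← hγ.map_eq s hs]
    exact (he (γ s)).to_localInverse.hasFDerivAt
  refine (hg_deriv.comp_hasDerivWithinAt s hc).congr_of_eventuallyEq ?_ ?_
  · filter_upwards [(hγ.continuousOn s hs).eventually hg_left, self_mem_nhdsWithin] with u hu huJ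
    rw [Function.comp_apply, ← hγ.map_eq u huJ, hu]
  · rw [Function.comp_apply, ← hγ.map_eq s hs, hg_left.self_of_nhds]

theorem IsLiftOn.lipschitzOnWith (he : ∀ x, HasStrictFDerivAt h (e x : E →L[ℝ] F) x) {C : ℝ≥0}
    (hC : ∀ x, ‖((e x).symm : F →L[ℝ] E)‖₊ ≤ C) {a w : F} {x : E} {γ : ℝ → E} {J : Set ℝ}
    (hJ : Convex ℝ J) (hγ : IsLiftOn h (fun s => a + s • w) x γ J) :
    LipschitzOnWith (C * ‖w‖₊) γ J := by
  refine hJ.lipschitzOnWith_of_nnnorm_hasDerivWithin_le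
    (fun s hs => hγ.hasDerivWithinAt he hs (w := w) ?_) fun s _ =>
      ((e (γ s)).symm : F →L[ℝ] E).le_of_opNorm_le (hC _) w
  simpa using (((hasDerivAt_id s).smul_const w).const_add a).hasDerivWithinAt

/-- A lift of a segment has speed at most `C` times the length of the segment, so it converges at
the end of its interval of existence and can be continued. -/
theorem exists_isLiftOn_segment (he : ∀ x, HasStrictFDerivAt h (e x : E →L[ℝ] F) x) {C : ℝ≥0}
    (hC : ∀ x, ‖((e x).symm : F →L[ℝ] E)‖₊ ≤ C) (x : E) (w : F) :
    ∃ γ, IsLiftOn h (fun s => h x + s • w) x γ (Icc 0 1) := by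
  refine IsLiftOn.exists_Icc_zero_one (isLocalHomeomorph_of_hasStrictFDerivAt he) (by fun_prop)
    (by simp) fun t ht γ hγ => ?_
  have hlip := hγ.lipschitzOnWith he hC (convex_Ico 0 t)
  have : (𝓝[Ico 0 t] t).NeBot := mem_closure_iff_nhdsWithin_neBot.1 <| by
    rw [closure_Ico ht.1.ne]
    exact right_mem_Icc.2 ht.1.le
  exact cauchy_map_iff_exists_tendsto.1 <|
    (cauchy_nhds.mono nhdsWithin_le_nhds).map_of_le hlip.uniformContinuousOn inf_le_right

/-- Hadamard's global inverse function theorem. -/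
theorem exists_homeomorph_of_norm_symm_le (he : ∀ x, HasStrictFDerivAt h (e x : E →L[ℝ] F) x)
    {C : ℝ≥0} (hC : ∀ x, ‖((e x).symm : F →L[ℝ] E)‖₊ ≤ C) : ∃ Φ : E ≃ₜ F, ⇑Φ = h := by
  have hh := isLocalHomeomorph_of_hasStrictFDerivAt he
  choose γ hγ using fun y : F => exists_isLiftOn_segment he hC 0 (y - h 0)
  have hγcont : Continuous fun q : unitInterval × F => γ q.2 q.1 := by
    refine hh.continuous_lift (T2Space.isSeparatedMap h)
      ⟨fun q => h 0 + (q.1 : ℝ) • (q.2 - h 0), by fun_prop⟩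
      (funext fun q => (hγ q.2).map_eq q.1 q.1.2) ?_
      fun y => continuousOn_iff_continuous_domRestrict.1 (hγ y).continuousOn
    simpa only [Icc.coe_zero, (hγ _).start] using continuous_const
  have hgcont : Continuous fun y => γ y 1 :=
    hγcont.comp (by fun_prop : Continuous fun y : F => ((1 : unitInterval), y))
  have right_inv : ∀ y, h (γ y 1) = y := fun y => by
    simp [(hγ y).map_eq 1 (right_mem_Icc.2 zero_le_one)]
  have base : γ (h 0) 1 = 0 := by
    refine (hγ (h 0)).eqOn hh ⟨continuousOn_const, fun s _ => ?_, rfl⟩ isPreconnected_Icc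
      (left_mem_Icc.2 zero_le_one) (right_mem_Icc.2 zero_le_one) (γ' := fun _ => 0)
    simp
  have left_inv : (fun x => γ (h x) 1) = id :=
    (T2Space.isSeparatedMap h).eq_of_comp_eq hh.isLocallyInjective (hgcont.comp hh.continuous)
      continuous_id (funext fun x => right_inv (h x)) 0 base
  exact ⟨⟨⟨h, fun y => γ y 1, congrFun left_inv, right_inv⟩, hh.continuous, hgcont⟩, rfl⟩

end GlobalInverse

/-- A finite family of self-maps of `X` with place-dependent probabilities: the point `x` is moved
to `map i x` with probability `weight i x`. -/
structure WeightedIFS (ι X : Type*) [Fintype ι] where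
  map : ι → X → X
  weight : ι → X → ℝ
  weight_nonneg : ∀ i x, 0 ≤ weight i x
  sum_weight : ∀ x, ∑ i, weight i x = 1

namespace WeightedIFS

section TransferOperator

variable {ι κ X Y : Type*} [Fintype ι] [Fintype κ]

/-- The transfer (Markov) operator: `transferOp S f x` is the mean value of `f` one step after
starting from `x`. -/
def transferOp (S : WeightedIFS ι X) : Module.End ℝ (X → ℝ) where
  toFun f x := ∑ i, S.weight i x * f (S.map i x)
  map_add' f g := by ext x; simp [mul_add, Finset.sum_add_distrib]
  map_smul' c f := by ext x; simp [Finset.mul_sum, mul_left_comm]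

theorem nonempty_index (S : WeightedIFS ι X) [Nonempty X] : Nonempty ι := by
  by_contra hι
  have : IsEmpty ι := not_nonempty_iff.1 hι
  simpa using S.sum_weight (Classical.arbitrary X)

variable (S : WeightedIFS ι X)

theorem weight_le_one (i : ι) (x : X) : S.weight i x ≤ 1 :=
  (Finset.single_le_sum (fun j _ => S.weight_nonneg j x) (Finset.mem_univ i)).trans_eq
    (S.sum_weight x)

theorem abs_weight_mul_le (i : ι) (x : X) {a B : ℝ} (ha : |a| ≤ B) : |S.weight i x * a| ≤ B := by
  rw [abs_mul, abs_of_nonneg (S.weight_nonneg i x)]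
  exact (mul_le_of_le_one_left (abs_nonneg _) (S.weight_le_one i x)).trans ha

theorem transferOp_apply (f : X → ℝ) (x : X) :
    S.transferOp f x = ∑ i, S.weight i x * f (S.map i x) := rfl

theorem transferOp_pow_succ (n : ℕ) (f : X → ℝ) :
    (S.transferOp ^ (n + 1)) f = S.transferOp ((S.transferOp ^ n) f) := by
  rw [pow_succ', Module.End.mul_apply]

theorem transferOp_mono {f g : X → ℝ} (hfg : f ≤ g) : S.transferOp f ≤ S.transferOp g :=
  fun x => Finset.sum_le_sum fun i _ => mul_le_mul_of_nonneg_left (hfg _) (S.weight_nonneg i x)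

theorem transferOp_pow_mono {f g : X → ℝ} (hfg : f ≤ g) (n : ℕ) :
    (S.transferOp ^ n) f ≤ (S.transferOp ^ n) g := by
  induction n with
  | zero => exact hfg
  | succ n ih => simpa only [transferOp_pow_succ] using S.transferOp_mono ih

theorem transferOp_const (c : ℝ) : S.transferOp (fun _ => c) = fun _ => c := by
  ext x
  rw [transferOp_apply, ← Finset.sum_mul, S.sum_weight, one_mul]

theorem transferOp_pow_const (c : ℝ) (n : ℕ) : (S.transferOp ^ n) (fun _ => c) = fun _ => c := by
  induction n with
  | zero => rfl
  | succ n ih => rw [transferOp_pow_succ, ih, transferOp_const]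

theorem abs_transferOp_le (f : X → ℝ) : |S.transferOp f| ≤ S.transferOp |f| := fun x =>
  (Finset.abs_sum_le_sum_abs _ _).trans_eq <| Finset.sum_congr rfl fun i _ => by
    rw [abs_mul, abs_of_nonneg (S.weight_nonneg i x), Pi.abs_apply]

theorem abs_transferOp_pow_le {f : X → ℝ} {B : ℝ} (hf : ∀ x, |f x| ≤ B) (n : ℕ) (x : X) :
    |(S.transferOp ^ n) f x| ≤ B := by
  rw [abs_le]
  constructor
  · simpa only [transferOp_pow_const] using
      S.transferOp_pow_mono (f := fun _ => -B) (fun x => (abs_le.1 (hf x)).1) n x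
  · simpa only [transferOp_pow_const] using
      S.transferOp_pow_mono (g := fun _ => B) (fun x => (abs_le.1 (hf x)).2) n x

theorem transferOp_pow_eqOn_zero {K : Set X} (hK : ∀ i, ∀ x ∈ K, S.map i x ∈ K) {f : X → ℝ}
    (hf : Set.EqOn f 0 K) (n : ℕ) : Set.EqOn ((S.transferOp ^ n) f) 0 K := by
  induction n with
  | zero => exact hf
  | succ n ih =>
    intro x hx
    rw [transferOp_pow_succ]
    exact Finset.sum_eq_zero fun i _ => by rw [ih (hK i x hx), Pi.zero_apply, mul_zero]

/-- Two independent copies of the random walk, run in parallel. -/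
def prod (S : WeightedIFS ι X) (T : WeightedIFS κ Y) : WeightedIFS (ι × κ) (X × Y) where
  map i z := (S.map i.1 z.1, T.map i.2 z.2)
  weight i z := S.weight i.1 z.1 * T.weight i.2 z.2
  weight_nonneg i z := mul_nonneg (S.weight_nonneg _ _) (T.weight_nonneg _ _)
  sum_weight z := by
    rw [Fintype.sum_prod_type]
    simp only [← Finset.mul_sum, T.sum_weight, mul_one, S.sum_weight]

theorem prod_transferOp_fst (T : WeightedIFS κ Y) (f : X → ℝ) :
    (S.prod T).transferOp (fun z => f z.1) = fun z => S.transferOp f z.1 := by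
  ext z
  simp only [transferOp_apply, prod, Fintype.sum_prod_type, mul_right_comm _ _ (f _),
    ← Finset.mul_sum, T.sum_weight, mul_one]

theorem prod_transferOp_snd (T : WeightedIFS κ Y) (g : Y → ℝ) :
    (S.prod T).transferOp (fun z => g z.2) = fun z => T.transferOp g z.2 := by
  ext z
  simp only [transferOp_apply, prod, Fintype.sum_prod_type, mul_assoc, ← Finset.mul_sum,
    ← Finset.sum_mul, S.sum_weight, one_mul]

theorem prod_transferOp_pow_sub (T : WeightedIFS κ Y) (f : X → ℝ) (g : Y → ℝ) (n : ℕ) :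
    ((S.prod T).transferOp ^ n) (fun z => f z.1 - g z.2) =
      fun z => (S.transferOp ^ n) f z.1 - (T.transferOp ^ n) g z.2 := by
  induction n with
  | zero => rfl
  | succ n ih =>
    have hsub : (fun z : X × Y => (S.transferOp ^ n) f z.1 - (T.transferOp ^ n) g z.2) =
        (fun z => (S.transferOp ^ n) f z.1) - fun z => (T.transferOp ^ n) g z.2 := rfl
    rw [transferOp_pow_succ, ih, hsub, map_sub, prod_transferOp_fst, prod_transferOp_snd]
    simp only [transferOp_pow_succ]
    rfl

/-- Transport of the system along a bijection of the underlying space. -/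
def conj (e : X ≃ Y) : WeightedIFS ι Y where
  map i y := e (S.map i (e.symm y))
  weight i y := S.weight i (e.symm y)
  weight_nonneg i _ := S.weight_nonneg i _
  sum_weight _ := S.sum_weight _

theorem conj_transferOp_pow (e : X ≃ Y) (f : Y → ℝ) (n : ℕ) (y : Y) :
    ((S.conj e).transferOp ^ n) f y = (S.transferOp ^ n) (f ∘ e) (e.symm y) := by
  induction n generalizing y with
  | zero => simp
  | succ n ih =>
    simp only [transferOp_pow_succ, transferOp_apply, ih]
    simp only [conj, Equiv.symm_apply_apply]

end TransferOperator

section Subharmonic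

variable {ι X : Type*} [Fintype ι] {S : WeightedIFS ι X} {w : X → ℝ}

/-- `w` does not exceed its mean value after one step. -/
def IsSubharmonic (S : WeightedIFS ι X) (w : X → ℝ) : Prop := w ≤ S.transferOp w

theorem IsSubharmonic.le_transferOp_pow (hw : S.IsSubharmonic w) (n : ℕ) :
    w ≤ (S.transferOp ^ n) w := by
  induction n with
  | zero => exact le_rfl
  | succ n ih =>
    rw [transferOp_pow_succ]
    exact hw.trans (S.transferOp_mono ih)

theorem IsSubharmonic.weight_mul_sub_le (hw : S.IsSubharmonic w) {D : ℝ} (hD : ∀ x, w x ≤ D)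
    (i : ι) (x : X) : S.weight i x * (D - w (S.map i x)) ≤ D - w x := by
  have hle : S.weight i x * (D - w (S.map i x)) ≤
      ∑ j, S.weight j x * (D - w (S.map j x)) :=
    Finset.single_le_sum (f := fun j => S.weight j x * (D - w (S.map j x)))
      (fun j _ => mul_nonneg (S.weight_nonneg j x) (sub_nonneg.2 (hD _))) (Finset.mem_univ i)
  have hsum : ∑ j, S.weight j x * (D - w (S.map j x)) = D - S.transferOp w x := by
    simp only [mul_sub, Finset.sum_sub_distrib, ← Finset.sum_mul, S.sum_weight, one_mul,
      transferOp_apply]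
  linarith [hw x]

theorem transferOp_pow_le_of_drift {V : X → ℝ} {ρ C : ℝ} (hρ0 : 0 ≤ ρ) (hρ1 : ρ < 1)
    (hV : ∀ x, S.transferOp V x ≤ ρ * V x + C) (n : ℕ) (x : X) :
    (S.transferOp ^ n) V x ≤ ρ ^ n * (V x - C / (1 - ρ)) + C / (1 - ρ) := by
  have hρ : 1 - ρ ≠ 0 := (sub_pos.2 hρ1).ne'
  have hfix : ρ * (C / (1 - ρ)) + C = C / (1 - ρ) := by field_simp; ring
  induction n generalizing x with
  | zero => simp
  | succ n ih =>
    set K := C / (1 - ρ)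
    have haffine : (fun x => ρ ^ n * (V x - K) + K) = ρ ^ n • V + fun _ => K - ρ ^ n * K := by
      ext y
      simp only [Pi.add_apply, Pi.smul_apply, smul_eq_mul]
      ring
    calc (S.transferOp ^ (n + 1)) V x
        ≤ S.transferOp (fun x => ρ ^ n * (V x - K) + K) x := by
          rw [transferOp_pow_succ]
          exact S.transferOp_mono ih x
      _ = ρ ^ n * S.transferOp V x + (K - ρ ^ n * K) := by
          rw [haffine, map_add, map_smul, transferOp_const]
          rfl
      _ ≤ ρ ^ n * (ρ * V x + C) + (K - ρ ^ n * K) := by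
          gcongr
          exact hV x
      _ = ρ ^ (n + 1) * (V x - K) + K := by
          linear_combination ρ ^ n * hfix

/-- A maximum principle: the walk returns to a sublevel set of the Lyapunov function `V`, so a
bounded subharmonic function is controlled by its values there. -/
theorem IsSubharmonic.le_of_le_on_sublevel (hw : S.IsSubharmonic w) (hbdd : BddAbove (Set.range w))
    {V : X → ℝ} (hV0 : ∀ x, 0 ≤ V x) {ρ C R a : ℝ} (hρ0 : 0 ≤ ρ) (hρ1 : ρ < 1) (hC : 0 ≤ C)
    (hV : ∀ x, S.transferOp V x ≤ ρ * V x + C) (hR : C / (1 - ρ) < R)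
    (ha : ∀ x, V x ≤ R → w x ≤ a) (x : X) : w x ≤ a := by
  set D := ⨆ x, w x
  have hD : ∀ x, w x ≤ D := le_ciSup hbdd
  set K := C / (1 - ρ)
  have hR0 : 0 < R := (div_nonneg hC (sub_pos.2 hρ1).le).trans_lt hR
  by_contra! hax
  have haD : 0 < D - a := sub_pos.2 (hax.trans_le (hD x))
  have interpolate : w ≤ (fun _ => a) + ((D - a) / R) • V := fun y => by
    simp only [Pi.add_apply, Pi.smul_apply, smul_eq_mul]
    rcases le_or_gt (V y) R with hy | hy
    · linarith [ha y hy, mul_nonneg (div_nonneg haD.le hR0.le) (hV0 y)]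
    · have : D - a ≤ (D - a) / R * V y := by
        rw [div_mul_eq_mul_div, le_div_iff₀ hR0]
        gcongr
      linarith [hD y]
  have iterate : ∀ y (n : ℕ), w y ≤ a + (D - a) / R * (ρ ^ n * (V y - K) + K) := fun y n => by
    refine (hw.le_transferOp_pow n y).trans ((S.transferOp_pow_mono interpolate n y).trans ?_)
    rw [map_add, map_smul, transferOp_pow_const]
    simp only [Pi.add_apply, Pi.smul_apply, smul_eq_mul]
    gcongr
    exact transferOp_pow_le_of_drift hρ0 hρ1 hV n y
  have limit : ∀ y, w y ≤ a + (D - a) / R * K := fun y => by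
    refine ge_of_tendsto' (x := atTop) ?_ (iterate y)
    have := (tendsto_pow_atTop_nhds_zero_of_lt_one hρ0 hρ1).mul_const (V y - K)
    simpa using ((this.add_const K).const_mul ((D - a) / R)).const_add a
  have : Nonempty X := ⟨x⟩
  have hsup : D - a ≤ (D - a) / R * K := by linarith [ciSup_le limit]
  rw [div_mul_eq_mul_div, le_div_iff₀ hR0] at hsup
  exact hR.not_ge (le_of_mul_le_mul_left hsup haD)

theorem isSubharmonic_limsup_abs_transferOp_pow {u : X → ℝ} {B : ℝ} (hu : ∀ x, |u x| ≤ B) :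
    S.IsSubharmonic fun x => limsup (fun n => |(S.transferOp ^ n) u x|) atTop := by
  set v : ℕ → X → ℝ := fun n x => |(S.transferOp ^ n) u x| with hv
  have hbdd : ∀ x, IsBoundedUnder (· ≤ ·) atTop fun n => v n x := fun x =>
    isBoundedUnder_of ⟨B, fun n => S.abs_transferOp_pow_le hu n x⟩
  intro x
  refine le_of_forall_pos_le_add fun η hη => ?_
  have hsucc : ∀ᶠ n in atTop, ∀ i, v n (S.map i x) ≤ limsup (fun n => v n (S.map i x)) atTop + η :=
    eventually_all.2 fun i => (eventually_lt_of_limsup_lt (lt_add_of_pos_right _ hη)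
      (hbdd _)).mono fun n => le_of_lt
  change limsup (fun n => v n x) atTop ≤ _
  rw [← limsup_nat_add _ 1]
  refine limsup_le_of_le (isCoboundedUnder_le_of_le atTop fun n => abs_nonneg _) ?_
  filter_upwards [hsucc] with n hn
  calc v (n + 1) x ≤ S.transferOp (v n) x := by
        simp only [hv, transferOp_pow_succ]
        exact S.abs_transferOp_le _ x
    _ ≤ ∑ i, S.weight i x * (limsup (fun n => v n (S.map i x)) atTop + η) :=
        Finset.sum_le_sum fun i _ => mul_le_mul_of_nonneg_left (hn i) (S.weight_nonneg i x)
    _ = _ := by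
        simp only [mul_add, Finset.sum_add_distrib, ← Finset.sum_mul, S.sum_weight, one_mul]
        rfl

end Subharmonic

end WeightedIFS

namespace WeightedIFS

section Stability

variable {ι X : Type*} [Fintype ι] [PseudoMetricSpace X] {S : WeightedIFS ι X} {ρ : ℝ}

/-- Two points moved by the same map, chosen with the probabilities at the first of them, come
closer by the factor `ρ` in mean. -/
def ContractsInMean (S : WeightedIFS ι X) (ρ : ℝ) : Prop :=
  ∀ x y, ∑ i, S.weight i x * dist (S.map i x) (S.map i y) ≤ ρ * dist x y

theorem ContractsInMean.exists_dist_le (hS : S.ContractsInMean ρ) (x y : X) :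
    ∃ i, dist (S.map i x) (S.map i y) ≤ ρ * dist x y := by
  by_contra! hfar
  have hpos : ∃ i ∈ Finset.univ, 0 < S.weight i x := by
    refine Finset.exists_lt_of_sum_lt ?_
    rw [S.sum_weight, Finset.sum_const_zero]
    exact one_pos
  have hlt : ∑ i, S.weight i x * (ρ * dist x y) <
      ∑ i, S.weight i x * dist (S.map i x) (S.map i y) :=
    Finset.sum_lt_sum
      (fun i _ => mul_le_mul_of_nonneg_left (hfar i).le (S.weight_nonneg i x))
      (hpos.imp fun i hi => ⟨hi.1, mul_lt_mul_of_pos_left (hfar i) hi.2⟩)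
  rw [← Finset.sum_mul, S.sum_weight, one_mul] at hlt
  exact hlt.not_ge (hS x y)

theorem ContractsInMean.transferOp_dist_le (hS : S.ContractsInMean ρ) (o x : X) :
    S.transferOp (fun y => dist y o) x ≤ ρ * dist x o + ∑ i, dist (S.map i o) o := by
  calc ∑ i, S.weight i x * dist (S.map i x) o
      ≤ ∑ i, (S.weight i x * dist (S.map i x) (S.map i o) + dist (S.map i o) o) := by
        refine Finset.sum_le_sum fun i _ => ?_
        have := mul_le_mul_of_nonneg_left (dist_triangle (S.map i x) (S.map i o) o)
          (S.weight_nonneg i x)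
        linarith [mul_le_mul_of_nonneg_right (S.weight_le_one i x)
          (dist_nonneg (x := S.map i o) (y := o))]
    _ ≤ ρ * dist x o + ∑ i, dist (S.map i o) o := by
        rw [Finset.sum_add_distrib]
        gcongr
        exact hS x o

theorem ContractsInMean.abs_transferOp_sub_le (hS : S.ContractsInMean ρ) {L : ℝ≥0}
    (hL : ∀ i, LipschitzWith L (S.weight i)) {f : X → ℝ} {A B : ℝ} (hA : 0 ≤ A)
    (hfB : ∀ x, |f x| ≤ B) (hfA : ∀ x y, |f x - f y| ≤ A * dist x y) (x y : X) :
    |S.transferOp f x - S.transferOp f y| ≤ (A * ρ + Fintype.card ι * (L * B)) * dist x y := by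
  have hsplit : S.transferOp f x - S.transferOp f y =
      ∑ i, (S.weight i x * (f (S.map i x) - f (S.map i y)) +
        (S.weight i x - S.weight i y) * f (S.map i y)) := by
    rw [transferOp_apply, transferOp_apply, ← Finset.sum_sub_distrib]
    exact Finset.sum_congr rfl fun i _ => by ring
  have hterm : ∀ i, |S.weight i x * (f (S.map i x) - f (S.map i y)) +
      (S.weight i x - S.weight i y) * f (S.map i y)| ≤
      A * (S.weight i x * dist (S.map i x) (S.map i y)) + L * B * dist x y := fun i => by
    refine (abs_add_le _ _).trans ?_
    rw [abs_mul, abs_mul, abs_of_nonneg (S.weight_nonneg i x)]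
    have hmap := mul_le_mul_of_nonneg_left (hfA (S.map i x) (S.map i y)) (S.weight_nonneg i x)
    have hweight := mul_le_mul ((hL i).dist_le_mul x y) (hfB (S.map i y)) (abs_nonneg _)
      (by positivity)
    rw [Real.dist_eq] at hweight
    linarith
  calc |S.transferOp f x - S.transferOp f y|
      ≤ ∑ i, (A * (S.weight i x * dist (S.map i x) (S.map i y)) + L * B * dist x y) := by
        rw [hsplit]
        exact (Finset.abs_sum_le_sum_abs _ _).trans (Finset.sum_le_sum fun i _ => hterm i)
    _ = A * ∑ i, S.weight i x * dist (S.map i x) (S.map i y) +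
          Fintype.card ι * (L * B * dist x y) := by
        rw [Finset.sum_add_distrib, ← Finset.mul_sum, Finset.sum_const, Finset.card_univ,
          nsmul_eq_mul]
    _ ≤ (A * ρ + Fintype.card ι * (L * B)) * dist x y := by
        linarith [mul_le_mul_of_nonneg_left (hS x y) hA]

theorem ContractsInMean.exists_abs_transferOp_pow_sub_le (hS : S.ContractsInMean ρ) (hρ : ρ < 1)
    {L : ℝ≥0} (hL : ∀ i, LipschitzWith L (S.weight i)) {f : X → ℝ} {A B : ℝ}
    (hfB : ∀ x, |f x| ≤ B) (hfA : ∀ x y, |f x - f y| ≤ A * dist x y) :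
    ∃ A', ∀ n x y, |(S.transferOp ^ n) f x - (S.transferOp ^ n) f y| ≤ A' * dist x y := by
  set K := Fintype.card ι * (L * B) / (1 - ρ)
  set A' := max (max A K) 0
  have hAA' : A ≤ A' := (le_max_left A K).trans (le_max_left _ _)
  have hKA' : Fintype.card ι * (L * B) ≤ A' * (1 - ρ) :=
    (div_le_iff₀ (sub_pos.2 hρ)).1 ((le_max_right A K).trans (le_max_left _ _))
  refine ⟨A', fun n => ?_⟩
  induction n with
  | zero => exact fun x y => (hfA x y).trans (by gcongr)
  | succ n ih =>
    intro x y
    rw [transferOp_pow_succ]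
    refine (hS.abs_transferOp_sub_le hL (le_max_right _ _) (S.abs_transferOp_pow_le hfB n) ih
      x y).trans ?_
    gcongr
    linarith

theorem ContractsInMean.pow_mul_le_sub (hS : S.ContractsInMean ρ) {δ : ℝ} (hδ : 0 ≤ δ)
    (hweight : ∀ i x, δ ≤ S.weight i x) {w : X × X → ℝ} (hw : (S.prod S).IsSubharmonic w)
    {D A : ℝ} (hD : ∀ z, w z ≤ D) (hA : 0 ≤ A) (hρ : 0 ≤ ρ)
    (hwA : ∀ x y, w (x, y) ≤ A * dist x y) (n : ℕ) (x y : X) :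
    (δ * δ) ^ n * (D - A * (ρ ^ n * dist x y)) ≤ D - w (x, y) := by
  induction n generalizing x y with
  | zero => linarith [hwA x y]
  | succ n ih =>
    obtain ⟨i, hi⟩ := hS.exists_dist_le x y
    calc (δ * δ) ^ (n + 1) * (D - A * (ρ ^ (n + 1) * dist x y))
        = δ * δ * ((δ * δ) ^ n * (D - A * (ρ ^ n * (ρ * dist x y)))) := by ring
      _ ≤ δ * δ * ((δ * δ) ^ n * (D - A * (ρ ^ n * dist (S.map i x) (S.map i y)))) := by gcongr
      _ ≤ δ * δ * (D - w (S.map i x, S.map i y)) := by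
          gcongr
          exact ih _ _
      _ ≤ S.weight i x * S.weight i y * (D - w (S.map i x, S.map i y)) :=
          mul_le_mul_of_nonneg_right
            (mul_le_mul (hweight i x) (hweight i y) hδ (S.weight_nonneg i x))
            (sub_nonneg.2 (hD _))
      _ ≤ D - w (x, y) := hw.weight_mul_sub_le hD (i, i) (x, y)

/-- A subharmonic function of two independent walks which vanishes on the diagonal at a linear rate
is nonpositive: the walks return to a bounded region, from where they come close to each other
with a probability bounded from below. -/
theorem ContractsInMean.nonpos_of_isSubharmonic (hS : S.ContractsInMean ρ) (hρ0 : 0 ≤ ρ)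
    (hρ1 : ρ < 1) {δ : ℝ} (hδ : 0 < δ) (hweight : ∀ i x, δ ≤ S.weight i x) {w : X × X → ℝ}
    (hw : (S.prod S).IsSubharmonic w) (hbdd : BddAbove (Set.range w)) {A : ℝ} (hA : 0 ≤ A)
    (hwA : ∀ x y, w (x, y) ≤ A * dist x y) (z : X × X) : w z ≤ 0 := by
  set o := z.1
  set C := ∑ i, dist (S.map i o) o
  set V : X × X → ℝ := (fun z => dist z.1 o) + fun z => dist z.2 o with hV
  have hdrift : ∀ z, (S.prod S).transferOp V z ≤ ρ * V z + (C + C) := fun z => by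
    rw [hV, map_add, prod_transferOp_fst S S fun y => dist y o,
      prod_transferOp_snd S S fun y => dist y o, Pi.add_apply, Pi.add_apply]
    linarith [hS.transferOp_dist_le o z.1, hS.transferOp_dist_le o z.2]
  set R := (C + C) / (1 - ρ) + 1
  set D := ⨆ z, w z
  have hD : ∀ z, w z ≤ D := le_ciSup hbdd
  refine (hD z).trans (le_of_not_gt fun hD0 => ?_)
  obtain ⟨n, hn⟩ : ∃ n : ℕ, A * (ρ ^ n * R) < D / 2 := by
    have := ((tendsto_pow_atTop_nhds_zero_of_lt_one hρ0 hρ1).mul_const R).const_mul A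
    rw [zero_mul, mul_zero] at this
    exact (this.eventually_lt_const (half_pos hD0)).exists
  have hsublevel : ∀ z, V z ≤ R → w z ≤ D - (δ * δ) ^ n * (D / 2) := fun z hz => by
    have hdist : dist z.1 z.2 ≤ R := (dist_triangle_right z.1 z.2 o).trans hz
    have : A * (ρ ^ n * dist z.1 z.2) ≤ D / 2 :=
      le_trans (by gcongr) hn.le
    have : (δ * δ) ^ n * (D / 2) ≤ (δ * δ) ^ n * (D - A * (ρ ^ n * dist z.1 z.2)) := by
      gcongr
      linarith
    linarith [hS.pow_mul_le_sub hδ.le hweight hw hD hA hρ0 hwA n z.1 z.2]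
  have hmax := hw.le_of_le_on_sublevel hbdd (fun z => add_nonneg dist_nonneg dist_nonneg) hρ0 hρ1
    (by positivity) hdrift (lt_add_one _) hsublevel
  have : Nonempty (X × X) := ⟨z⟩
  have : 0 < (δ * δ) ^ n * (D / 2) := by positivity
  linarith [ciSup_le hmax]

theorem ContractsInMean.tendsto_transferOp_pow_sub (hS : S.ContractsInMean ρ) (hρ0 : 0 ≤ ρ)
    (hρ1 : ρ < 1) {δ : ℝ} (hδ : 0 < δ) (hweight : ∀ i x, δ ≤ S.weight i x) {L : ℝ≥0}
    (hL : ∀ i, LipschitzWith L (S.weight i)) {f : X → ℝ} {A B : ℝ} (hfB : ∀ x, |f x| ≤ B)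
    (hfA : ∀ x y, |f x - f y| ≤ A * dist x y) (x y : X) :
    Tendsto (fun n => (S.transferOp ^ n) f x - (S.transferOp ^ n) f y) atTop (𝓝 0) := by
  obtain ⟨A', hA'⟩ := hS.exists_abs_transferOp_pow_sub_le hρ1 hL hfB hfA
  set u : X × X → ℝ := fun z => f z.1 - f z.2
  have hu : ∀ z, |u z| ≤ B + B := fun z =>
    (abs_sub _ _).trans (add_le_add (hfB _) (hfB _))
  have hpow : ∀ n z, ((S.prod S).transferOp ^ n) u z =
      (S.transferOp ^ n) f z.1 - (S.transferOp ^ n) f z.2 := fun n =>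
    congrFun (prod_transferOp_pow_sub S S f f n)
  have hcobdd : ∀ z, IsCoboundedUnder (· ≤ ·) atTop fun n => |((S.prod S).transferOp ^ n) u z| :=
    fun z => isCoboundedUnder_le_of_le atTop fun n => abs_nonneg _
  have hlimsup := hS.nonpos_of_isSubharmonic (A := max A' 0) hρ0 hρ1 hδ hweight
    (isSubharmonic_limsup_abs_transferOp_pow hu) ⟨B + B, ?_⟩ (le_max_right _ _)
    (fun x y => limsup_le_of_le (hcobdd _) (Eventually.of_forall fun n => ?_)) (x, y)
  · rw [tendsto_zero_iff_abs_tendsto_zero]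
    simp only [hpow] at hlimsup
    refine tendsto_order.2 ⟨fun a ha => Eventually.of_forall fun n => ha.trans_le (abs_nonneg _),
      fun a ha => eventually_lt_of_limsup_lt (hlimsup.trans_lt ha) (isBoundedUnder_of ⟨B + B, ?_⟩)⟩
    exact fun n => (congrArg abs (hpow n (x, y))).ge.trans
      ((S.prod S).abs_transferOp_pow_le hu n (x, y))
  · rintro _ ⟨z, rfl⟩
    exact limsup_le_of_le (hcobdd _)
      (Eventually.of_forall fun n => (S.prod S).abs_transferOp_pow_le hu n z)
  · rw [hpow]
    exact (hA' n x y).trans (by gcongr; exact le_max_left _ _)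

end Stability

end WeightedIFS

theorem memHolder_zero_of_abs_le {X : Type*} [PseudoEMetricSpace X] {f : X → ℝ} {B : ℝ}
    (hf : ∀ x, |f x| ≤ B) : MemHolder 0 f := by
  refine ⟨(B + B).toNNReal, fun x y => ?_⟩
  rw [NNReal.coe_zero, ENNReal.rpow_zero, mul_one, edist_dist]
  exact ENNReal.ofReal_le_ofReal ((abs_sub _ _).trans (add_le_add (hf x) (hf y)))

theorem lipschitzWith_comp_ofSnowflaking {X Y : Type*} [PseudoEMetricSpace X]
    [PseudoEMetricSpace Y] {C ε : ℝ≥0} (hε0 : 0 < (ε : ℝ)) (hε1 : (ε : ℝ) ≤ 1) {f : X → Y}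
    (hf : HolderWith C ε f) :
    LipschitzWith C (f ∘ Snowflaking.ofSnowflaking (hα₀ := hε0) (hα₁ := hε1)) := fun x y => by
  simpa only [Function.comp_apply, Snowflaking.edist_ofSnowflaking_ofSnowflaking,
    ENNReal.rpow_inv_rpow hε0.ne'] using hf.edist_le x.ofSnowflaking y.ofSnowflaking

theorem exp_mul_le_of_abs_le {ε M s : ℝ} (hε : 0 ≤ ε) (hs : |s| ≤ M) (hεM : ε * M ≤ 1) :
    Real.exp (ε * s) ≤ 1 + ε * s + ε ^ 2 * M ^ 2 := by
  have habs : |ε * s| ≤ ε * M := by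
    rw [abs_mul, abs_of_nonneg hε]
    gcongr
  have hexp := (abs_le.1 (Real.abs_exp_sub_one_sub_id_le (habs.trans hεM))).2
  have hsq : (ε * s) ^ 2 ≤ (ε * M) ^ 2 := sq_le_sq' (abs_le.1 habs).1 (abs_le.1 habs).2
  linarith [mul_pow ε M 2]

namespace WeightedIFS

section ContractionOnAverage

variable {ι X : Type*} [Fintype ι]

/-- Contraction on average: the logarithmic contraction rate has mean less than `-b`. -/
def ContractsOnAverage [Dist X] (S : WeightedIFS ι X) (b : ℝ) : Prop :=
  ∀ x y, x ≠ y →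
    ∑ i, S.weight i x * Real.log (dist (S.map i x) (S.map i y) / dist x y) < -b

/-- Both distortion bounds for the maps, with the constants in logarithmic form. -/
def IsBilipschitz [Dist X] (S : WeightedIFS ι X) (M : ℝ) : Prop :=
  ∀ i x y, Real.exp (-M) * dist x y ≤ dist (S.map i x) (S.map i y) ∧
    dist (S.map i x) (S.map i y) ≤ Real.exp M * dist x y

theorem IsBilipschitz.abs_log_div_le [MetricSpace X] {S : WeightedIFS ι X} {M : ℝ}
    (hM : S.IsBilipschitz M) (i : ι) {x y : X} (hxy : x ≠ y) :
    0 < dist (S.map i x) (S.map i y) / dist x y ∧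
      |Real.log (dist (S.map i x) (S.map i y) / dist x y)| ≤ M := by
  have hd := dist_pos.2 hxy
  have hlower := (le_div_iff₀ hd).2 (hM i x y).1
  have hpos := (Real.exp_pos _).trans_le hlower
  exact ⟨hpos, abs_le.2 ⟨(Real.le_log_iff_exp_le hpos).2 hlower,
    (Real.log_le_iff_le_exp hpos).2 ((div_le_iff₀ hd).2 (hM i x y).2)⟩⟩

/-- The moment `∑ pᵢ rᵢ ^ ε` of the contraction ratios has derivative `∑ pᵢ log rᵢ < 0` at
`ε = 0`, so it drops below `1` for small `ε`. -/
theorem ContractsOnAverage.exists_sum_dist_rpow_le [MetricSpace X] {S : WeightedIFS ι X}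
    {b M α : ℝ} (hS : S.ContractsOnAverage b) (hb : 0 < b) (hM : S.IsBilipschitz M)
    (hα : 0 < α) : ∃ ε > 0, ε ≤ α ∧ ∃ ρ, 0 ≤ ρ ∧ ρ < 1 ∧
      ∀ x y, ∑ i, S.weight i x * dist (S.map i x) (S.map i y) ^ ε ≤ ρ * dist x y ^ ε := by
  have hsmall : ∀ᶠ ε in 𝓝[>] (0 : ℝ), ε * M ≤ 1 ∧ ε * M ^ 2 ≤ b / 2 ∧ ε ≤ α := by
    have hlim : ∀ c : ℝ, Tendsto (fun ε : ℝ => ε * c) (𝓝[>] 0) (𝓝 0) := fun c => by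
      simpa using (tendsto_id.mul_const c).mono_left (nhdsWithin_le_nhds (a := (0 : ℝ)))
    exact ((hlim M).eventually_le_const one_pos).and
      (((hlim (M ^ 2)).eventually_le_const (half_pos hb)).and
        (by simpa using (hlim 1).eventually_le_const hα))
  obtain ⟨ε, ⟨hεM, hεb, hεα⟩, hε : 0 < ε⟩ := (hsmall.and self_mem_nhdsWithin).exists
  refine ⟨ε, hε, hεα, Real.exp (-(ε * b / 2)), (Real.exp_pos _).le,
    Real.exp_lt_one_iff.2 (by linarith [mul_pos hε hb]), fun x y => ?_⟩
  rcases eq_or_ne x y with rfl | hxy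
  · simp [Real.zero_rpow hε.ne']
  set r : ι → ℝ := fun i => dist (S.map i x) (S.map i y) / dist x y
  have hratio : ∀ i, r i ^ ε ≤ 1 + ε * Real.log (r i) + ε ^ 2 * M ^ 2 := fun i => by
    obtain ⟨hr, hlog⟩ := hM.abs_log_div_le i hxy
    rw [Real.rpow_def_of_pos hr, mul_comm]
    exact exp_mul_le_of_abs_le hε.le hlog hεM
  have hmoment : ∑ i, S.weight i x * r i ^ ε ≤ Real.exp (-(ε * b / 2)) :=
    calc ∑ i, S.weight i x * r i ^ ε
        ≤ ∑ i, S.weight i x * (1 + ε * Real.log (r i) + ε ^ 2 * M ^ 2) :=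
          Finset.sum_le_sum fun i _ => mul_le_mul_of_nonneg_left (hratio i) (S.weight_nonneg i x)
      _ = 1 + ε * ∑ i, S.weight i x * Real.log (r i) + ε * (ε * M ^ 2) := by
          simp only [mul_add, Finset.sum_add_distrib, ← Finset.sum_mul, S.sum_weight,
            Finset.mul_sum, mul_left_comm ε]
          ring
      _ ≤ 1 + ε * -b + ε * (b / 2) := by
          gcongr
          exact (hS x y hxy).le
      _ ≤ Real.exp (-(ε * b / 2)) := by
          linarith [Real.add_one_le_exp (-(ε * b / 2))]
  have hd := dist_pos.2 hxy
  calc ∑ i, S.weight i x * dist (S.map i x) (S.map i y) ^ ε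
      = (∑ i, S.weight i x * r i ^ ε) * dist x y ^ ε := by
        rw [Finset.sum_mul]
        refine Finset.sum_congr rfl fun i _ => ?_
        rw [mul_assoc, ← Real.mul_rpow (by positivity) hd.le, div_mul_cancel₀ _ hd.ne']
    _ ≤ _ := by gcongr

/-- The law of the walk forgets its starting point. -/
def IsAsymptoticallyStable [PseudoMetricSpace X] (S : WeightedIFS ι X) : Prop :=
  ∀ (f : X → ℝ) (A : ℝ≥0) (B : ℝ), LipschitzWith A f → (∀ x, |f x| ≤ B) →
    ∀ x y, Tendsto (fun n => (S.transferOp ^ n) f x - (S.transferOp ^ n) f y) atTop (𝓝 0)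

/-- Replacing the metric by a small power of itself turns contraction on average into contraction
in mean. -/
theorem ContractsOnAverage.isAsymptoticallyStable [MetricSpace X] {S : WeightedIFS ι X}
    {b M δ : ℝ} {α : ℝ≥0} (hS : S.ContractsOnAverage b) (hb : 0 < b) (hM : S.IsBilipschitz M)
    (hα : 0 < α) (hholder : ∀ i, MemHolder α (S.weight i)) (hδ : 0 < δ)
    (hweight : ∀ i x, δ ≤ S.weight i x) : S.IsAsymptoticallyStable := by
  obtain ⟨ε, hε0, hε, ρ, hρ0, hρ1, hρ⟩ :=
    hS.exists_sum_dist_rpow_le hb hM (lt_min (NNReal.coe_pos.2 hα) one_pos)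
  lift ε to ℝ≥0 using hε0.le
  have hεα : ε ≤ α := NNReal.coe_le_coe.1 (hε.trans (min_le_left _ _))
  have hε1 : (ε : ℝ) ≤ 1 := hε.trans (min_le_right _ _)
  set e : X ≃ Snowflaking X ε hε0 hε1 := Snowflaking.toSnowflaking
  have hcontr : (S.conj e).ContractsInMean ρ := fun x y => by
    simpa only [conj, e, Snowflaking.symm_toSnowflaking,
      Snowflaking.dist_toSnowflaking_toSnowflaking, Snowflaking.dist_ofSnowflaking_ofSnowflaking,
      Real.rpow_inv_rpow dist_nonneg hε0.ne'] using hρ x.ofSnowflaking y.ofSnowflaking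
  have hlipschitz : ∃ L, ∀ i, LipschitzWith L ((S.conj e).weight i) := by
    have hmem : ∀ i, MemHolder ε (S.weight i) := fun i =>
      (memHolder_zero_of_abs_le (B := 1) fun x => by
        rw [abs_of_nonneg (S.weight_nonneg i x)]
        exact S.weight_le_one i x).memHolder_of_le_of_le (hholder i) zero_le hεα
    choose C hC using hmem
    exact ⟨∑ i, C i, fun i => (lipschitzWith_comp_ofSnowflaking hε0 hε1 (hC i)).weaken
      (Finset.single_le_sum (fun _ _ => zero_le) (Finset.mem_univ i))⟩
  obtain ⟨L, hL⟩ := hlipschitz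
  intro f A B hfA hfB x y
  obtain ⟨C, hC⟩ := (memHolder_zero_of_abs_le hfB).memHolder_of_le_of_le
    (HolderWith.memHolder (holderWith_one.2 hfA)) zero_le (by exact_mod_cast hε1)
  have hfC : LipschitzWith C (f ∘ e.symm) := lipschitzWith_comp_ofSnowflaking hε0 hε1 hC
  have hlim := hcontr.tendsto_transferOp_pow_sub hρ0 hρ1 hδ (fun i x => hweight i _) hL
    (fun x => hfB (e.symm x)) (fun x y => hfC.dist_le_mul x y) (e x) (e y)
  change Tendsto (fun n => ((S.conj e).transferOp ^ n) (f ∘ e.symm) (e x) -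
    ((S.conj e).transferOp ^ n) (f ∘ e.symm) (e y)) atTop (𝓝 0) at hlim
  have hcomp : (f ∘ e.symm) ∘ e = f := funext fun z => congrArg f (e.symm_apply_apply z)
  simpa only [conj_transferOp_pow, Equiv.symm_apply_apply, hcomp] using hlim

end ContractionOnAverage

end WeightedIFS

section ErgodicSums

open Set

variable {X : Type*} {T : X → X} {g : X → ℝ}

theorem partialSups_birkhoffSum_succ (T : X → X) (g : X → ℝ) (n : ℕ) (x : X) :
    partialSups (birkhoffSum T g) (n + 1) x =
      max 0 (g x + partialSups (birkhoffSum T g) n (T x)) := by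
  have hsucc : ∀ m y, partialSups (birkhoffSum T g) (m + 1) y =
      max (partialSups (birkhoffSum T g) m y) (birkhoffSum T g (m + 1) y) := fun m y => by
    rw [← Order.succ_eq_add_one, partialSups_succ, Pi.sup_apply]
  induction n with
  | zero => simp [hsucc]
  | succ n ih =>
    rw [hsucc, ih, hsucc, birkhoffSum_succ', ← max_add_add_left, ← max_assoc]

theorem partialSups_birkhoffSum_nonneg (T : X → X) (g : X → ℝ) (n : ℕ) (x : X) :
    0 ≤ partialSups (birkhoffSum T g) n x := by
  simpa using le_partialSups_of_le (birkhoffSum T g) n.zero_le x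

theorem abs_partialSups_birkhoffSum_succ_sub_le (T : X → X) (g : X → ℝ) (n : ℕ) (x : X) :
    |partialSups (birkhoffSum T g) (n + 1) x - partialSups (birkhoffSum T g) n (T x)| ≤ |g x| := by
  have hnonneg := partialSups_birkhoffSum_nonneg T g n (T x)
  rw [partialSups_birkhoffSum_succ, abs_le]
  rcases max_cases 0 (g x + partialSups (birkhoffSum T g) n (T x))
    with ⟨hmax, hle⟩ | ⟨hmax, hle⟩ <;>
    rw [hmax] <;> constructor <;> linarith [hle, neg_abs_le (g x), le_abs_self (g x)]

theorem bddAbove_range_birkhoffSum_comp_iff (T : X → X) (g : X → ℝ) (x : X) :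
    BddAbove (range fun n => birkhoffSum T g n (T x)) ↔
      BddAbove (range fun n => birkhoffSum T g n x) := by
  simp only [bddAbove_def, forall_mem_range]
  refine ⟨fun ⟨C, hC⟩ => ⟨max 0 (g x + C), fun n => ?_⟩, fun ⟨C, hC⟩ => ⟨C - g x, fun n => ?_⟩⟩
  · cases n with
    | zero => simp
    | succ n =>
      rw [birkhoffSum_succ']
      exact le_max_of_le_right (add_le_add_right (hC n) _)
  · have := hC (n + 1)
    rw [birkhoffSum_succ'] at this
    linarith

theorem tendsto_partialSups_birkhoffSum_succ_sub {x : X}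
    (hx : ¬BddAbove (range fun n => birkhoffSum T g n x)) :
    Tendsto (fun n => partialSups (birkhoffSum T g) (n + 1) x -
      partialSups (birkhoffSum T g) n (T x)) atTop (𝓝 (g x)) := by
  rw [← bddAbove_range_birkhoffSum_comp_iff, not_bddAbove_iff] at hx
  obtain ⟨_, ⟨m, rfl⟩, hm⟩ := hx (-g x)
  refine tendsto_const_nhds.congr' ?_
  filter_upwards [eventually_ge_atTop m] with n hn
  have hle := le_partialSups_of_le (birkhoffSum T g) hn (T x)
  rw [partialSups_birkhoffSum_succ, max_eq_right (by linarith), add_sub_cancel_right]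

variable [MeasurableSpace X] {ν : Measure X}

theorem measurable_birkhoffSum (hT : Measurable T) (hg : Measurable g) (n : ℕ) :
    Measurable (birkhoffSum T g n) :=
  Finset.measurable_sum _ fun k _ => hg.comp (hT.iterate k)

theorem integrable_birkhoffSum (hT : MeasurePreserving T ν ν) (hg : Integrable g ν) (n : ℕ) :
    Integrable (birkhoffSum T g n) ν :=
  integrable_finsetSum _ fun k _ => (hT.iterate k).integrable_comp_of_integrable hg

theorem integrable_partialSups {f : ℕ → X → ℝ} (hf : ∀ n, Integrable (f n) ν) (n : ℕ) :
    Integrable (partialSups f n) ν := by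
  induction n with
  | zero => simpa using hf 0
  | succ n ih =>
    rw [← Order.succ_eq_add_one, partialSups_succ]
    exact ih.sup (hf _)

theorem integral_nonneg_of_ae_not_bddAbove_birkhoffSum (hT : MeasurePreserving T ν ν)
    (hg : Integrable g ν) (h : ∀ᵐ x ∂ν, ¬BddAbove (range fun n => birkhoffSum T g n x)) :
    0 ≤ ∫ x, g x ∂ν := by
  have hint := integrable_partialSups (integrable_birkhoffSum hT hg)
  have hcomp : ∀ n, Integrable (fun x => partialSups (birkhoffSum T g) n (T x)) ν := fun n =>
    hT.integrable_comp_of_integrable (hint n)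
  refine ge_of_tendsto' (tendsto_integral_of_dominated_convergence (fun x => |g x|)
    (fun n => ((hint (n + 1)).sub (hcomp n)).aestronglyMeasurable) hg.abs
    (fun n => .of_forall (abs_partialSups_birkhoffSum_succ_sub_le T g n))
    (h.mono fun x hx => tendsto_partialSups_birkhoffSum_succ_sub hx)) fun n => ?_
  have hinv : ∫ x, partialSups (birkhoffSum T g) n (T x) ∂ν =
      ∫ x, partialSups (birkhoffSum T g) n x ∂ν := by
    rw [← integral_map hT.aemeasurable (hT.map_eq.symm ▸ (hint n).aestronglyMeasurable),
      hT.map_eq]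
  rw [integral_sub' (hint (n + 1)) (hcomp n), hinv, sub_nonneg]
  exact integral_mono (hint n) (hint (n + 1)) ((partialSups _).monotone n.le_succ)

theorem ae_bddAbove_birkhoffSum (hT : Ergodic T ν) (hg : Measurable g) (hgi : Integrable g ν)
    (hneg : ∫ x, g x ∂ν < 0) : ∀ᵐ x ∂ν, BddAbove (range fun n => birkhoffSum T g n x) := by
  have hmeas : MeasurableSet {x | BddAbove (range fun n => birkhoffSum T g n x)} :=
    measurableSet_bddAbove_range (measurable_birkhoffSum hT.measurable hg)
  have hinv : T ⁻¹' {x | BddAbove (range fun n => birkhoffSum T g n x)} =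
      {x | BddAbove (range fun n => birkhoffSum T g n x)} :=
    ext fun x => bddAbove_range_birkhoffSum_comp_iff T g x
  rcases hT.measure_self_or_compl_eq_zero hmeas hinv with hzero | hzero
  · exact absurd (integral_nonneg_of_ae_not_bddAbove_birkhoffSum hT.toMeasurePreserving hgi
      (measure_eq_zero_iff_ae_notMem.1 hzero)) hneg.not_ge
  · exact hzero

theorem ae_exists_birkhoffSum_le [IsProbabilityMeasure ν] (hT : Ergodic T ν) (hg : Measurable g)
    (hgi : Integrable g ν) {c : ℝ} (hc : ∫ x, g x ∂ν < c) :
    ∀ᵐ x ∂ν, ∃ C, ∀ n : ℕ, birkhoffSum T g n x ≤ n * c + C := by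
  have hneg : ∫ x, (g x - c) ∂ν < 0 := by
    rw [integral_sub hgi (integrable_const c)]
    simpa using hc
  filter_upwards [ae_bddAbove_birkhoffSum hT (hg.sub_const c) (hgi.sub (integrable_const c)) hneg]
    with x ⟨C, hC⟩
  refine ⟨C, fun n => ?_⟩
  have hn : birkhoffSum T (fun y => g y - c) n x ≤ C := hC ⟨n, rfl⟩
  simp only [birkhoffSum, Finset.sum_sub_distrib, Finset.sum_const, Finset.card_range,
    nsmul_eq_mul] at hn ⊢
  linarith

theorem ae_exists_abs_birkhoffSum_sub_le [IsProbabilityMeasure ν] (hT : Ergodic T ν)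
    (hg : Measurable g) (hgi : Integrable g ν) {η : ℝ} (hη : 0 < η) :
    ∀ᵐ x ∂ν, ∃ C, ∀ n : ℕ, |birkhoffSum T g n x - n * ∫ y, g y ∂ν| ≤ n * η + C := by
  have hneg : ∫ x, (-g) x ∂ν < -(∫ x, g x ∂ν) + η := by
    simpa only [Pi.neg_apply, integral_neg] using lt_add_of_pos_right _ hη
  filter_upwards [ae_exists_birkhoffSum_le hT hg hgi (lt_add_of_pos_right _ hη),
    ae_exists_birkhoffSum_le hT hg.neg hgi.neg hneg] with x ⟨C, hC⟩ ⟨D, hD⟩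
  refine ⟨max C D, fun n => abs_le.2 ⟨?_, ?_⟩⟩
  · have := hD n
    rw [birkhoffSum_neg] at this
    linarith [le_max_right C D]
  · linarith [hC n, le_max_left C D]

end ErgodicSums

section DimensionOfMeasures

open Set

theorem ediam_closedBall_le_ofReal {X : Type*} [PseudoMetricSpace X] (x : X) (r : ℝ) :
    ediam (closedBall x r) ≤ ENNReal.ofReal (2 * r) := by
  refine ediam_le fun y hy z hz => ?_
  rw [edist_dist]
  refine ENNReal.ofReal_le_ofReal ((dist_triangle_right y z x).trans ?_)
  linarith [mem_closedBall.1 hy, mem_closedBall.1 hz]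

section Lower

variable {X : Type*} [MetricSpace X] [MeasurableSpace X] {ν : Measure X} {t : ℝ}

theorem lowerDimH_le_upperDimH [NeZero ν] : lowerDimH ν ≤ upperDimH ν := by
  refine le_iInf₂ fun s hs =>
    iInf₂_le s ((pos_iff_ne_zero (a := ν s)).2 fun hzero => NeZero.ne ν ?_)
  rw [← Measure.measure_univ_eq_zero, ← union_compl_self s]
  exact measure_union_null hzero hs

theorem measure_le_mul_ediam_rpow {C r₀ : ℝ} (ht : 0 < t) {y : X} {u : Set X} (hy : y ∈ u)
    (hu : ediam u < ENNReal.ofReal r₀) (hball : ∀ r, 0 < r → r < r₀ →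
      ν (closedBall y r) ≤ ENNReal.ofReal (C * r ^ t)) :
    ν u ≤ ENNReal.ofReal C * ediam u ^ t := by
  have hfin : ediam u ≠ ∞ := hu.ne_top
  have hD : ENNReal.ofReal (diam u) = ediam u := ENNReal.ofReal_toReal hfin
  have hlt : diam u < r₀ := (ENNReal.lt_ofReal_iff_toReal_lt hfin).1 hu
  have hle : ∀ᶠ r in 𝓝[>] diam u, ν u ≤ ENNReal.ofReal (C * r ^ t) := by
    filter_upwards [Ioo_mem_nhdsGT hlt] with r hr
    refine (measure_mono fun z hz => ?_).trans (hball r (diam_nonneg.trans_lt hr.1) hr.2)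
    exact (dist_le_diam_of_mem' hfin hz hy).trans hr.1.le
  have hlim : Tendsto (fun r : ℝ => ENNReal.ofReal (C * r ^ t)) (𝓝[>] diam u)
      (𝓝 (ENNReal.ofReal (C * diam u ^ t))) :=
    ENNReal.tendsto_ofReal (((Real.continuousAt_rpow_const _ t (.inr ht.le)).tendsto.mono_left
      nhdsWithin_le_nhds).const_mul C)
  refine (ge_of_tendsto hlim hle).trans_eq ?_
  rw [ENNReal.ofReal_mul' (by positivity), ← ENNReal.ofReal_rpow_of_nonneg diam_nonneg ht.le, hD]

variable [BorelSpace X]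

theorem smul_restrict_le_hausdorffMeasure {C r₀ : ℝ} (ht : 0 < t) (hC : 0 < C) (hr₀ : 0 < r₀)
    {A : Set X} (hball : ∀ y ∈ A, ∀ r, 0 < r → r < r₀ →
      ν (closedBall y r) ≤ ENNReal.ofReal (C * r ^ t)) :
    (ENNReal.ofReal C)⁻¹ • ν.restrict A ≤ μH[t] := by
  obtain ⟨δ, hδ, hδr₀⟩ := exists_between hr₀
  refine Measure.le_hausdorffMeasure t _ (ENNReal.ofReal δ) (ENNReal.ofReal_pos.2 hδ)
    fun u hu => ?_
  rw [Measure.smul_apply, smul_eq_mul, ENNReal.inv_mul_le_iff (ENNReal.ofReal_pos.2 hC).ne'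
    ENNReal.ofReal_ne_top]
  calc ν.restrict A u ≤ ν (closure u ∩ A) :=
        (measure_mono subset_closure).trans_eq (Measure.restrict_apply measurableSet_closure)
    _ ≤ ENNReal.ofReal C * ediam (closure u) ^ t := by
        rcases (closure u ∩ A).eq_empty_or_nonempty with hempty | ⟨y, hy⟩
        · simp [hempty]
        · refine (measure_mono inter_subset_left).trans
            (measure_le_mul_ediam_rpow ht hy.1 ?_ (hball y hy.2))
          rw [ediam_closure]
          exact hu.trans_lt ((ENNReal.ofReal_lt_ofReal_iff hr₀).2 hδr₀)
    _ = ENNReal.ofReal C * ediam u ^ t := by rw [ediam_closure]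

theorem ofReal_le_dimH_of_measure_closedBall_le {C r₀ : ℝ} (ht : 0 < t) (hC : 0 < C)
    (hr₀ : 0 < r₀) {A : Set X} (hball : ∀ y ∈ A, ∀ r, 0 < r → r < r₀ →
      ν (closedBall y r) ≤ ENNReal.ofReal (C * r ^ t)) (hA : ν A ≠ 0) :
    ENNReal.ofReal t ≤ dimH A := by
  refine le_dimH_of_hausdorffMeasure_ne_zero fun hzero => hA ?_
  rw [Real.coe_toNNReal t ht.le] at hzero
  have hle := smul_restrict_le_hausdorffMeasure ht hC hr₀ hball A
  rw [hzero, Measure.smul_apply, Measure.restrict_apply_self, smul_eq_mul] at hle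
  exact (mul_eq_zero.1 (le_zero_iff.1 hle)).resolve_left
    (ENNReal.inv_ne_zero.2 ENNReal.ofReal_ne_top)

theorem ofReal_le_lowerDimH_of_measure_closedBall_le
    (hball : ∀ᵐ x ∂ν, ∃ C r₀ : ℝ, 0 < r₀ ∧ ∀ r, 0 < r → r < r₀ →
      ν (closedBall x r) ≤ ENNReal.ofReal (C * r ^ t)) : ENNReal.ofReal t ≤ lowerDimH ν := by
  rcases le_or_gt t 0 with ht | ht
  · simp [ENNReal.ofReal_of_nonpos ht]
  set A : ℕ → Set X := fun N => {x | ∀ r : ℝ, 0 < r → r < 1 / ((N : ℝ) + 1) →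
    ν (closedBall x r) ≤ ENNReal.ofReal ((N + 1) * r ^ t)}
  have hcover : ∀ᵐ x ∂ν, ∃ N, x ∈ A N := by
    filter_upwards [hball] with x ⟨C, r₀, hr₀, hx⟩
    obtain ⟨m, hm⟩ := exists_nat_one_div_lt hr₀
    refine ⟨max m ⌈C⌉₊, fun r hr hrN => (hx r hr ?_).trans ?_⟩
    · refine (hrN.trans_le ?_).trans hm
      gcongr
      exact le_max_left _ _
    · gcongr
      exact (Nat.le_ceil C).trans ((Nat.cast_le.2 (le_max_right m _)).trans (by simp))
  refine le_iInf₂ fun s hs => ?_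
  obtain ⟨N, hN⟩ : ∃ N, ν (s ∩ A N) ≠ 0 := by
    by_contra! hzero
    refine hs.ne' (measure_eq_zero_iff_ae_notMem.2 ?_)
    filter_upwards [hcover, ae_all_iff.2 fun N => measure_eq_zero_iff_ae_notMem.1 (hzero N)]
      with x ⟨N, hxN⟩ hx hxs using hx N ⟨hxs, hxN⟩
  exact (ofReal_le_dimH_of_measure_closedBall_le ht N.cast_add_one_pos
    Nat.one_div_pos_of_nat (fun y hy => hy.2) hN).trans (dimH_mono inter_subset_left)

end Lower

section Upper

variable {X : Type*} [MetricSpace X] [MeasurableSpace X] {ν : Measure X} {t : ℝ}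

theorem exists_vitali_cover [SecondCountableTopology X] {A : Set X}
    (hA : ∀ x ∈ A, ∃ᶠ r in 𝓝[>] (0 : ℝ), ENNReal.ofReal (r ^ t) ≤ ν (closedBall x r))
    {δ : ℝ} (hδ : 0 < δ) :
    ∃ (u : Set X) (r : X → ℝ), u.Countable ∧ u.PairwiseDisjoint (fun x => closedBall x (r x)) ∧
      (∀ x ∈ u, 0 < r x ∧ r x ≤ δ ∧ ENNReal.ofReal (r x ^ t) ≤ ν (closedBall x (r x))) ∧
      A ⊆ ⋃ x ∈ u, closedBall x (5 * r x) := by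
  have hex : ∀ x ∈ A, ∃ r, 0 < r ∧ r ≤ δ ∧ ENNReal.ofReal (r ^ t) ≤ ν (closedBall x r) :=
    fun x hx => by
      obtain ⟨r, hr, h0, hrδ⟩ := ((hA x hx).and_eventually (Ioc_mem_nhdsGT hδ)).exists
      exact ⟨r, h0, hrδ, hr⟩
  choose! r hr using hex
  obtain ⟨u, huA, hdisj, hcover⟩ :=
    Vitali.exists_disjoint_subfamily_covering_enlargement_closedBall A (fun x => x) r δ
      (fun x hx => (hr x hx).2.1) 5 (by norm_num)
  refine ⟨u, r, hdisj.countable_of_nonempty_interior fun x hx => ⟨x, ?_⟩, hdisj,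
    fun x hx => hr x (huA hx), fun x hx => ?_⟩
  · exact ball_subset_interior_closedBall (mem_ball_self (hr x (huA hx)).1)
  · obtain ⟨y, hy, hsub⟩ := hcover x hx
    exact mem_biUnion hy (hsub (mem_closedBall_self (hr x hx).1.le))

theorem tsum_ediam_rpow_le [BorelSpace X] (ht : 0 ≤ t) {u : Set X} (hu : u.Countable) {r : X → ℝ}
    (hdisj : u.PairwiseDisjoint fun x => closedBall x (r x))
    (hr : ∀ x ∈ u, 0 < r x ∧ ENNReal.ofReal (r x ^ t) ≤ ν (closedBall x (r x))) :
    ∑' x : u, ediam (closedBall (x : X) (5 * r x)) ^ t ≤ ENNReal.ofReal (10 ^ t) * ν univ := by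
  calc ∑' x : u, ediam (closedBall (x : X) (5 * r x)) ^ t
      ≤ ∑' x : u, ENNReal.ofReal (10 ^ t) * ν (closedBall (x : X) (r x)) := by
        refine ENNReal.tsum_le_tsum fun x => ?_
        obtain ⟨hpos, hmass⟩ := hr x x.2
        calc ediam (closedBall (x : X) (5 * r x)) ^ t
            ≤ ENNReal.ofReal (2 * (5 * r x)) ^ t :=
              ENNReal.rpow_le_rpow (ediam_closedBall_le_ofReal _ _) ht
          _ = ENNReal.ofReal (10 ^ t) * ENNReal.ofReal (r x ^ t) := by
              rw [← mul_assoc, ENNReal.ofReal_rpow_of_nonneg (by positivity) ht,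
                Real.mul_rpow (by norm_num) hpos.le, ENNReal.ofReal_mul (by positivity)]
              norm_num
          _ ≤ _ := by gcongr
    _ = ENNReal.ofReal (10 ^ t) * ν (⋃ x ∈ u, closedBall x (r x)) := by
        rw [ENNReal.tsum_mul_left, measure_biUnion hu hdisj fun _ _ => measurableSet_closedBall]
    _ ≤ _ := by
        gcongr
        exact subset_univ _

variable [SecondCountableTopology X] [BorelSpace X] [IsFiniteMeasure ν]

theorem dimH_le_ofReal_of_frequently_le_measure_closedBall (ht : 0 ≤ t) {A : Set X}
    (hA : ∀ x ∈ A, ∃ᶠ r in 𝓝[>] (0 : ℝ), ENNReal.ofReal (r ^ t) ≤ ν (closedBall x r)) :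
    dimH A ≤ ENNReal.ofReal t := by
  choose u r hu hdisj hr hcover using fun m : ℕ =>
    exists_vitali_cover hA (Nat.one_div_pos_of_nat (α := ℝ) (n := m))
  have hcount : ∀ m, Countable (u m) := fun m => (hu m).to_subtype
  have hlim : Tendsto (fun m : ℕ => ENNReal.ofReal (2 * (5 * (1 / ((m : ℝ) + 1))))) atTop
      (𝓝 0) := by
    simpa using ENNReal.tendsto_ofReal
      (((tendsto_one_div_add_atTop_nhds_zero_nat (𝕜 := ℝ)).const_mul 5).const_mul 2)
  have hH : μH[t] A ≤ ENNReal.ofReal (10 ^ t) * ν univ := by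
    refine (Measure.hausdorffMeasure_le_liminf_tsum t A _ hlim
      (fun m (x : u m) => closedBall (x : X) (5 * r m x)) (.of_forall fun m x => ?_)
      (.of_forall fun m => ?_)).trans (liminf_le_of_le (by isBoundedDefault) fun b hb => ?_)
    · refine (ediam_closedBall_le_ofReal _ _).trans ?_
      gcongr
      exact (hr m x x.2).2.1
    · simpa only [iUnion_coe_set] using hcover m
    · obtain ⟨m, hm⟩ := hb.exists
      exact hm.trans (tsum_ediam_rpow_le ht (hu m) (hdisj m)
        fun x hx => ⟨(hr m x hx).1, (hr m x hx).2.2⟩)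
  refine dimH_le_of_hausdorffMeasure_ne_top ?_
  rw [Real.coe_toNNReal t ht]
  exact ne_top_of_le_ne_top (ENNReal.mul_ne_top ENNReal.ofReal_ne_top (measure_ne_top _ _)) hH

theorem upperDimH_le_ofReal_of_frequently_le_measure_closedBall (ht : 0 ≤ t)
    (h : ∀ᵐ x ∂ν, ∃ᶠ r in 𝓝[>] (0 : ℝ), ENNReal.ofReal (r ^ t) ≤ ν (closedBall x r)) :
    upperDimH ν ≤ ENNReal.ofReal t :=
  (iInf₂_le {x | ∃ᶠ r in 𝓝[>] (0 : ℝ), ENNReal.ofReal (r ^ t) ≤ ν (closedBall x r)} h).trans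
    (dimH_le_ofReal_of_frequently_le_measure_closedBall ht fun _ hx => hx)

end Upper

theorem ae_eventually_pow_le_measure_closedBall {E : Type*} [NormedAddCommGroup E]
    [NormedSpace ℝ E] [FiniteDimensional ℝ E] [MeasurableSpace E] [BorelSpace E] (ν : Measure E)
    [IsLocallyFiniteMeasure ν] : ∀ᵐ y ∂ν, ∀ᶠ r in 𝓝[>] (0 : ℝ),
      ENNReal.ofReal (r ^ (Module.finrank ℝ E + 1)) ≤ ν (closedBall y r) := by
  have : ProperSpace E := FiniteDimensional.proper_real E
  set vol : Measure E := Measure.addHaar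
  filter_upwards [Besicovitch.ae_tendsto_rnDeriv vol ν, Measure.rnDeriv_lt_top vol ν]
    with y hy hfin
  set B := vol.rnDeriv ν y + 1
  have hB : B ≠ ∞ := by simp [B, hfin.ne]
  have hB0 : B ≠ 0 := by simp [B]
  have hsmall : ∀ᶠ r in 𝓝[>] (0 : ℝ), B * ENNReal.ofReal r < vol (closedBall 0 1) := by
    have hlim : Tendsto (fun r : ℝ => B * ENNReal.ofReal r) (𝓝[>] 0) (𝓝 (B * 0)) :=
      ENNReal.Tendsto.const_mul (by simpa using
        (ENNReal.tendsto_ofReal tendsto_id).mono_left (nhdsWithin_le_nhds (a := (0 : ℝ))))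
        (.inr hB)
    rw [mul_zero] at hlim
    exact hlim.eventually_lt_const (measure_closedBall_pos vol 0 one_pos)
  filter_upwards [hy.eventually_lt_const (ENNReal.lt_add_right hfin.ne one_ne_zero), hsmall,
    self_mem_nhdsWithin] with r hratio hr (hr0 : 0 < r)
  have hvol : vol (closedBall y r) ≤ B * ν (closedBall y r) :=
    (ENNReal.div_le_iff_le_mul (.inr hB) (.inr hB0)).1 hratio.le
  rw [Measure.addHaar_closedBall' vol y hr0.le] at hvol
  refine (ENNReal.mul_le_mul_iff_right hB0 hB).1 (le_trans ?_ hvol)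
  rw [pow_succ, ENNReal.ofReal_mul (by positivity), mul_left_comm]
  gcongr

end DimensionOfMeasures

section ScalingDynamics

open Set

section Iteration

variable {X : Type*} {T : X → X} {a b : X → ℝ} {m : X → ℝ → ℝ≥0∞} {R : ℝ}

theorem le_ofReal_exp_mul_iterate (n : ℕ) {x : X} {r : ℝ}
    (h : ∀ k, ∀ ρ ≤ R, m (T^[k] x) ρ ≤ ENNReal.ofReal (Real.exp (-b (T^[k] x))) *
      m (T^[k + 1] x) (ρ * Real.exp (a (T^[k] x))))
    (hr : ∀ j < n, r * Real.exp (birkhoffSum T a j x) ≤ R) :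
    m x r ≤ ENNReal.ofReal (Real.exp (-birkhoffSum T b n x)) *
      m (T^[n] x) (r * Real.exp (birkhoffSum T a n x)) := by
  induction n generalizing x r with
  | zero => simp
  | succ n ih =>
    refine (h 0 r (by simpa using hr 0 n.succ_pos)).trans ?_
    refine (mul_le_mul_right (ih (x := T x) (fun k => h (k + 1)) fun j hj => ?_) _).trans_eq ?_
    · simpa only [Function.iterate_zero_apply, birkhoffSum_succ', Real.exp_add, mul_assoc]
        using hr (j + 1) (by lia)
    · simp only [Function.iterate_zero_apply, birkhoffSum_succ', neg_add, Real.exp_add, mul_assoc,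
        ENNReal.ofReal_mul (Real.exp_pos _).le, Function.iterate_succ_apply]

theorem ofReal_exp_mul_iterate_le (n : ℕ) {x : X} {r : ℝ}
    (h : ∀ k, ∀ ρ ≤ R, ENNReal.ofReal (Real.exp (-b (T^[k] x))) *
      m (T^[k + 1] x) (ρ * Real.exp (a (T^[k] x))) ≤ m (T^[k] x) ρ)
    (hr : ∀ j < n, r * Real.exp (birkhoffSum T a j x) ≤ R) :
    ENNReal.ofReal (Real.exp (-birkhoffSum T b n x)) *
      m (T^[n] x) (r * Real.exp (birkhoffSum T a n x)) ≤ m x r := by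
  induction n generalizing x r with
  | zero => simp
  | succ n ih =>
    refine le_trans ?_ (h 0 r (by simpa using hr 0 n.succ_pos))
    refine le_trans (le_of_eq ?_)
      (mul_le_mul_right (ih (x := T x) (fun k => h (k + 1)) fun j hj => ?_) _)
    · simp only [Function.iterate_zero_apply, birkhoffSum_succ', neg_add, Real.exp_add, mul_assoc,
        ENNReal.ofReal_mul (Real.exp_pos _).le, Function.iterate_succ_apply]
    · simpa only [Function.iterate_zero_apply, birkhoffSum_succ', Real.exp_add, mul_assoc]
        using hr (j + 1) (by lia)

theorem exists_le_rpow_of_birkhoffSum_bounds {x : X} {Λ C D t : ℝ} (hm : ∀ y r, m y r ≤ 1)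
    (hR : 0 < R) (hΛ : 0 < Λ) (ht : 0 < t)
    (h : ∀ k, ∀ ρ ≤ R, m (T^[k] x) ρ ≤ ENNReal.ofReal (Real.exp (-b (T^[k] x))) *
      m (T^[k + 1] x) (ρ * Real.exp (a (T^[k] x))))
    (hC : ∀ n, birkhoffSum T a n x ≤ n * Λ + C)
    (hD : ∀ n, -birkhoffSum T b n x ≤ n * -(t * Λ) + D) :
    ∃ C r₀ : ℝ, 0 < r₀ ∧ ∀ r, 0 < r → r < r₀ → m x r ≤ ENNReal.ofReal (C * r ^ t) := by
  set r₀ := R * Real.exp (-C)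
  have hr₀ : 0 < r₀ := by positivity
  refine ⟨Real.exp D * r₀ ^ (-t), r₀, hr₀, fun r hr hrr₀ => ?_⟩
  -- `n` is the number of steps after which the ball reaches the macroscopic scale.
  set ℓ := Real.log (r₀ / r) / Λ
  have hℓΛ : ℓ * Λ = Real.log (r₀ / r) := div_mul_cancel₀ _ hΛ.ne'
  have hℓ : 0 ≤ ℓ := div_nonneg (Real.log_nonneg ((one_le_div hr).2 hrr₀.le)) hΛ.le
  set n := ⌊ℓ⌋₊ + 1
  have hscale : ∀ j < n, r * Real.exp (birkhoffSum T a j x) ≤ R := fun j hj => by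
    have hjℓ : (j : ℝ) ≤ ℓ := (Nat.le_floor_iff hℓ).1 (Nat.lt_succ_iff.1 hj)
    calc r * Real.exp (birkhoffSum T a j x) ≤ r * Real.exp (ℓ * Λ + C) := by
          gcongr
          exact (hC j).trans (by gcongr)
      _ = R := by
          rw [hℓΛ, Real.exp_add, Real.exp_log (by positivity), ← mul_assoc,
            mul_div_cancel₀ _ hr.ne', mul_assoc, ← Real.exp_add, neg_add_cancel, Real.exp_zero,
            mul_one]
  have hmass : -birkhoffSum T b n x ≤ D - t * Real.log (r₀ / r) := by
    have hn : ℓ ≤ n := by simpa [n] using (Nat.lt_floor_add_one ℓ).le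
    rw [← hℓΛ]
    linarith [hD n, mul_le_mul_of_nonneg_right hn (mul_pos ht hΛ).le]
  refine ((le_ofReal_exp_mul_iterate n h hscale).trans
    (mul_le_of_le_one_right' (hm _ _))).trans (ENNReal.ofReal_le_ofReal ?_)
  rw [Real.rpow_def_of_pos hr, Real.rpow_def_of_pos hr₀, ← Real.exp_add, ← Real.exp_add,
    Real.exp_le_exp]
  rw [Real.log_div hr₀.ne' hr.ne'] at hmass
  linarith

-- The radius `exp (log R - C - n * (A + κ))` reaches the scale `exp (-3 * n * κ)`, rather than a
-- macroscopic one, after `n` steps: the fluctuations of the ergodic sums are absorbed this way.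
theorem frequently_rpow_le_of_birkhoffSum_bounds {x : X} {A B C C' t κ : ℝ} {D : ℕ}
    (hm : ∀ y, Monotone (m y)) (hR : 0 < R) (hA : 0 < A) (ht : 0 < t) (hκ : 0 < κ)
    (hκD : (1 + 3 * D) * κ < t * A - B)
    (h : ∀ k, ∀ ρ ≤ R, ENNReal.ofReal (Real.exp (-b (T^[k] x))) *
      m (T^[k + 1] x) (ρ * Real.exp (a (T^[k] x))) ≤ m (T^[k] x) ρ)
    (hC : ∀ n, |birkhoffSum T a n x - n * A| ≤ n * κ + C)
    (hC' : ∀ n, birkhoffSum T b n x ≤ n * (B + κ) + C')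
    (hfreq : ∃ᶠ n : ℕ in atTop, ENNReal.ofReal (Real.exp (-(n * (3 * κ))) ^ D) ≤
      m (T^[n] x) (Real.exp (-(n * (3 * κ))))) :
    ∃ᶠ r in 𝓝[>] (0 : ℝ), ENNReal.ofReal (r ^ t) ≤ m x r := by
  set ρ : ℕ → ℝ := fun n => Real.log R - C - n * (A + κ)
  have hlim : Tendsto (fun n => Real.exp (ρ n)) atTop (𝓝[>] 0) :=
    tendsto_nhdsWithin_iff.2 ⟨Real.tendsto_exp_atBot.comp (tendsto_atBot_add_const_left _ _
      (tendsto_neg_atTop_atBot.comp (tendsto_natCast_atTop_atTop.atTop_mul_const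
        (add_pos hA hκ)))), .of_forall fun n => Real.exp_pos _⟩
  have hlarge : ∀ c : ℝ, ∀ γ > 0, ∀ᶠ n : ℕ in atTop, c ≤ n * γ := fun c γ hγ =>
    (tendsto_natCast_atTop_atTop.atTop_mul_const hγ).eventually_ge_atTop c
  refine hlim.frequently (((hfreq.and_eventually ((hlarge (2 * C - Real.log R) κ hκ).and
    (hlarge (t * (Real.log R - C) + C') _ (sub_pos.2 hκD))))).mono fun n ⟨hn, hn₁, hn₂⟩ => ?_)
  have hscale : ∀ j < n, Real.exp (ρ n) * Real.exp (birkhoffSum T a j x) ≤ R := fun j hj => by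
    rw [← Real.exp_add, ← Real.le_log_iff_exp_le hR]
    have hjn : (j : ℝ) * (A + κ) ≤ n * (A + κ) := by gcongr
    linarith [(abs_le.1 (hC j)).2]
  have hradius : Real.exp (-(n * (3 * κ))) ≤ Real.exp (ρ n) * Real.exp (birkhoffSum T a n x) := by
    rw [← Real.exp_add, Real.exp_le_exp]
    linarith [hn₁, (abs_le.1 (hC n)).1]
  refine le_trans ?_ ((mul_le_mul_right (hn.trans (hm _ hradius)) _).trans
    (ofReal_exp_mul_iterate_le n h hscale))
  rw [← ENNReal.ofReal_mul (Real.exp_pos _).le, Real.rpow_def_of_pos (Real.exp_pos _),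
    Real.log_exp, ← Real.exp_nat_mul, ← Real.exp_add]
  gcongr
  have := mul_nonneg (mul_nonneg n.cast_nonneg ht.le) hκ.le
  linarith [hn₂, hC' n]

end Iteration

theorem ae_forall_iterate {X : Type*} [MeasurableSpace X] {ν : Measure X} {T : X → X}
    (hT : MeasurePreserving T ν ν) {p : X → Prop} (h : ∀ᵐ x ∂ν, p x) :
    ∀ᵐ x ∂ν, ∀ n, p (T^[n] x) :=
  ae_all_iff.2 fun n => (hT.iterate n).quasiMeasurePreserving.ae h

theorem ae_frequently_iterate_mem {X : Type*} [MeasurableSpace X] {ν : Measure X} {T : X → X}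
    (hT : Conservative T ν) {s : ℕ → Set X} (hs : ∀ n, MeasurableSet (s n))
    (h : ∀ᵐ x ∂ν, ∀ᶠ n in atTop, x ∈ s n) : ∀ᵐ x ∂ν, ∃ᶠ n in atTop, T^[n] x ∈ s n := by
  have hrec : ∀ N, ∀ᵐ x ∂ν, x ∈ ⋂ n ≥ N, s n → ∃ᶠ n in atTop, T^[n] x ∈ ⋂ n ≥ N, s n := fun N =>
    hT.ae_mem_imp_frequently_image_mem
      (MeasurableSet.biInter (to_countable _) fun n _ => hs n).nullMeasurableSet
  filter_upwards [h, ae_all_iff.2 hrec] with x hx hxrec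
  obtain ⟨N, hN⟩ := eventually_atTop.1 hx
  exact ((hxrec N (mem_iInter₂.2 hN)).and_eventually (eventually_ge_atTop N)).mono
    fun n hn => mem_iInter₂.1 hn.1 n hn.2

theorem measurable_measure_closedBall {X : Type*} [PseudoMetricSpace X]
    [SecondCountableTopology X] [MeasurableSpace X] [OpensMeasurableSpace X] (ν : Measure X)
    [SFinite ν] (r : ℝ) : Measurable fun y => ν (closedBall y r) := by
  have hs : MeasurableSet {q : X × X | dist q.2 q.1 ≤ r} :=
    (isClosed_le (continuous_snd.dist continuous_fst) continuous_const).measurableSet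
  exact measurable_measure_prodMk_left hs

variable {X : Type*} [MetricSpace X] [MeasurableSpace X] {ν : Measure X} [IsProbabilityMeasure ν]
  {T : X → X} {a b : X → ℝ} {R t : ℝ}

theorem ae_measure_closedBall_le_rpow (hT : Ergodic T ν) (ha : Measurable a)
    (hai : Integrable a ν) (hb : Measurable b) (hbi : Integrable b ν) (hR : 0 < R)
    (hball : ∀ᵐ x ∂ν, ∀ r ≤ R, ν (closedBall x r) ≤
      ENNReal.ofReal (Real.exp (-b x)) * ν (closedBall (T x) (r * Real.exp (a x))))
    (ht : 0 < t) (ha0 : 0 ≤ ∫ x, a x ∂ν) (hab : t * ∫ x, a x ∂ν < ∫ x, b x ∂ν) :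
    ∀ᵐ x ∂ν, ∃ C r₀ : ℝ, 0 < r₀ ∧ ∀ r, 0 < r → r < r₀ →
      ν (closedBall x r) ≤ ENNReal.ofReal (C * r ^ t) := by
  obtain ⟨Λ, hΛ, hΛb⟩ := exists_between ((lt_div_iff₀' ht).2 hab)
  have hΛ0 : 0 < Λ := ha0.trans_lt hΛ
  have hneg : ∫ x, (-b) x ∂ν < -(t * Λ) := by
    simpa only [Pi.neg_apply, integral_neg, neg_lt_neg_iff] using (lt_div_iff₀' ht).1 hΛb
  filter_upwards [ae_exists_birkhoffSum_le hT ha hai hΛ,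
    ae_exists_birkhoffSum_le hT hb.neg hbi.neg hneg,
    ae_forall_iterate hT.toMeasurePreserving hball] with x ⟨C, hC⟩ ⟨D, hD⟩ hx
  exact exists_le_rpow_of_birkhoffSum_bounds (m := fun y r => ν (closedBall y r))
    (fun _ _ => prob_le_one) hR hΛ0 ht
    (fun k => Function.iterate_succ_apply' T k x ▸ hx k) hC fun n => by
      simpa only [birkhoffSum_neg] using hD n

section SecondCountable

variable [SecondCountableTopology X] [BorelSpace X]

theorem ae_frequently_pow_le_measure_closedBall_iterate (hT : MeasurePreserving T ν ν) {D : ℕ}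
    (hD : ∀ᵐ y ∂ν, ∀ᶠ r in 𝓝[>] (0 : ℝ), ENNReal.ofReal (r ^ D) ≤ ν (closedBall y r)) {κ : ℝ}
    (hκ : 0 < κ) : ∀ᵐ x ∂ν, ∃ᶠ n : ℕ in atTop, ENNReal.ofReal (Real.exp (-(n * κ)) ^ D) ≤
      ν (closedBall (T^[n] x) (Real.exp (-(n * κ)))) := by
  have hlim : Tendsto (fun n : ℕ => Real.exp (-(n * κ))) atTop (𝓝[>] 0) :=
    tendsto_nhdsWithin_iff.2 ⟨Real.tendsto_exp_neg_atTop_nhds_zero.comp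
      (tendsto_natCast_atTop_atTop.atTop_mul_const hκ), .of_forall fun n => Real.exp_pos _⟩
  exact ae_frequently_iterate_mem hT.conservative
    (s := fun n : ℕ => {y | ENNReal.ofReal (Real.exp (-(n * κ)) ^ D) ≤
      ν (closedBall y (Real.exp (-(n * κ))))})
    (fun n => measurableSet_le measurable_const (measurable_measure_closedBall ν _))
    (hD.mono fun y hy => hlim.eventually hy)

theorem ae_frequently_rpow_le_measure_closedBall (hT : Ergodic T ν) (ha : Measurable a)
    (hai : Integrable a ν) (hb : Measurable b) (hbi : Integrable b ν) (hR : 0 < R)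
    (hball : ∀ᵐ x ∂ν, ∀ r ≤ R, ENNReal.ofReal (Real.exp (-b x)) *
      ν (closedBall (T x) (r * Real.exp (a x))) ≤ ν (closedBall x r))
    {D : ℕ} (hD : ∀ᵐ y ∂ν, ∀ᶠ r in 𝓝[>] (0 : ℝ), ENNReal.ofReal (r ^ D) ≤ ν (closedBall y r))
    (ht : 0 < t) (ha0 : 0 < ∫ x, a x ∂ν) (hab : ∫ x, b x ∂ν < t * ∫ x, a x ∂ν) :
    ∀ᵐ x ∂ν, ∃ᶠ r in 𝓝[>] (0 : ℝ), ENNReal.ofReal (r ^ t) ≤ ν (closedBall x r) := by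
  obtain ⟨κ, hκ, hκD⟩ := exists_pos_mul_lt (sub_pos.2 hab) (1 + 3 * (D : ℝ))
  filter_upwards [ae_exists_abs_birkhoffSum_sub_le hT ha hai hκ,
    ae_exists_birkhoffSum_le hT hb hbi (lt_add_of_pos_right _ hκ),
    ae_forall_iterate hT.toMeasurePreserving hball,
    ae_frequently_pow_le_measure_closedBall_iterate hT.toMeasurePreserving hD
      (mul_pos three_pos hκ)] with x ⟨C, hC⟩ ⟨C', hC'⟩ hx hfreq
  exact frequently_rpow_le_of_birkhoffSum_bounds (m := fun y r => ν (closedBall y r))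
    (fun y r s hrs => measure_mono (closedBall_subset_closedBall hrs)) hR ha0 ht hκ hκD
    (fun k => Function.iterate_succ_apply' T k x ▸ hx k) hC hC' hfreq

end SecondCountable

/-- Along the map `T`, small balls are expanded by `exp φ` while their `ν`-mass is multiplied by
`exp ψ`, up to an arbitrarily small error in both exponents. -/
def ScalesBalls (T : X → X) (φ ψ : X → ℝ) (ν : Measure X) : Prop :=
  ∀ η > 0, ∃ R > 0, ∀ᵐ x ∂ν, ∀ r ≤ R,
    ν (closedBall x r) ≤ ENNReal.ofReal (Real.exp (-(ψ x - η))) *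
      ν (closedBall (T x) (r * Real.exp (φ x + η))) ∧
    ENNReal.ofReal (Real.exp (-(ψ x + η))) *
      ν (closedBall (T x) (r * Real.exp (φ x - η))) ≤ ν (closedBall x r)

namespace ScalesBalls

variable [BorelSpace X] {φ ψ : X → ℝ}

theorem ofReal_div_le_lowerDimH (h : ScalesBalls T φ ψ ν) (hT : Ergodic T ν)
    (hφ : Measurable φ) (hφi : Integrable φ ν) (hψ : Measurable ψ) (hψi : Integrable ψ ν)
    (hφ0 : 0 < ∫ x, φ x ∂ν) :
    ENNReal.ofReal ((∫ x, ψ x ∂ν) / ∫ x, φ x ∂ν) ≤ lowerDimH ν := by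
  rcases le_or_gt ((∫ x, ψ x ∂ν) / ∫ x, φ x ∂ν) 0 with hs | hs
  · simp [ENNReal.ofReal_of_nonpos hs]
  refine le_of_tendsto
    (ENNReal.continuous_ofReal.continuousWithinAt (s := Iio ((∫ x, ψ x ∂ν) / ∫ x, φ x ∂ν))) ?_
  filter_upwards [Ioo_mem_nhdsLT hs] with t ⟨ht, hts⟩
  obtain ⟨η, hη, hηt⟩ := exists_pos_mul_lt (sub_pos.2 ((lt_div_iff₀ hφ0).1 hts)) (t + 1)
  obtain ⟨R, hR, hball⟩ := h η hη
  refine ofReal_le_lowerDimH_of_measure_closedBall_le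
    (ae_measure_closedBall_le_rpow (a := fun x => φ x + η) (b := fun x => ψ x - η) hT
      (hφ.add_const η) (hφi.add (integrable_const η)) (hψ.sub_const η)
      (hψi.sub (integrable_const η)) hR (hball.mono fun x hx r hr => (hx r hr).1) ht ?_ ?_)
  · rw [integral_add hφi (integrable_const η)]
    simpa using (add_pos hφ0 hη).le
  · rw [integral_add hφi (integrable_const η), integral_sub hψi (integrable_const η)]
    simp only [integral_const, probReal_univ, one_smul]
    linarith

theorem upperDimH_le_ofReal_div [SecondCountableTopology X] (h : ScalesBalls T φ ψ ν)
    (hT : Ergodic T ν) (hφ : Measurable φ) (hφi : Integrable φ ν) (hψ : Measurable ψ)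
    (hψi : Integrable ψ ν) {D : ℕ}
    (hD : ∀ᵐ y ∂ν, ∀ᶠ r in 𝓝[>] (0 : ℝ), ENNReal.ofReal (r ^ D) ≤ ν (closedBall y r))
    (hφ0 : 0 < ∫ x, φ x ∂ν) (hψ0 : 0 ≤ ∫ x, ψ x ∂ν) :
    upperDimH ν ≤ ENNReal.ofReal ((∫ x, ψ x ∂ν) / ∫ x, φ x ∂ν) := by
  have hs : 0 ≤ (∫ x, ψ x ∂ν) / ∫ x, φ x ∂ν := div_nonneg hψ0 hφ0.le
  refine ge_of_tendsto
    (ENNReal.continuous_ofReal.continuousWithinAt (s := Ioi ((∫ x, ψ x ∂ν) / ∫ x, φ x ∂ν))) ?_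
  filter_upwards [self_mem_nhdsWithin] with t hst
  have ht : 0 < t := hs.trans_lt hst
  obtain ⟨η, hη, hηt⟩ := exists_pos_mul_lt
    (lt_min hφ0 (sub_pos.2 ((div_lt_iff₀ hφ0).1 hst))) (t + 1)
  obtain ⟨R, hR, hball⟩ := h η hη
  obtain ⟨hη₁, hη₂⟩ := lt_min_iff.1 hηt
  refine upperDimH_le_ofReal_of_frequently_le_measure_closedBall ht.le
    (ae_frequently_rpow_le_measure_closedBall (a := fun x => φ x - η) (b := fun x => ψ x + η) hT
      (hφ.sub_const η) (hφi.sub (integrable_const η)) (hψ.add_const η)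
      (hψi.add (integrable_const η)) hR (hball.mono fun x hx r hr => (hx r hr).2) hD ht ?_ ?_)
  · rw [integral_sub hφi (integrable_const η)]
    simp only [integral_const, probReal_univ, one_smul]
    linarith [mul_pos ht hη]
  · rw [integral_sub hφi (integrable_const η), integral_add hψi (integrable_const η)]
    simp only [integral_const, probReal_univ, one_smul]
    linarith

theorem dimH_eq_ofReal_div [SecondCountableTopology X] (h : ScalesBalls T φ ψ ν)
    (hT : Ergodic T ν) (hφ : Measurable φ) (hφi : Integrable φ ν) (hψ : Measurable ψ)
    (hψi : Integrable ψ ν) {D : ℕ}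
    (hD : ∀ᵐ y ∂ν, ∀ᶠ r in 𝓝[>] (0 : ℝ), ENNReal.ofReal (r ^ D) ≤ ν (closedBall y r))
    (hφ0 : 0 < ∫ x, φ x ∂ν) (hψ0 : 0 ≤ ∫ x, ψ x ∂ν) :
    lowerDimH ν = upperDimH ν ∧
      upperDimH ν = ENNReal.ofReal ((∫ x, ψ x ∂ν) / ∫ x, φ x ∂ν) := by
  have hlower := h.ofReal_div_le_lowerDimH hT hφ hφi hψ hψi hφ0
  have hupper := h.upperDimH_le_ofReal_div hT hφ hφi hψ hψi hD hφ0 hψ0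
  have hle : lowerDimH ν ≤ upperDimH ν := lowerDimH_le_upperDimH
  exact ⟨hle.antisymm (hupper.trans hlower), hupper.antisymm (hlower.trans hle)⟩

end ScalesBalls

end ScalingDynamics

section LipschitzTestFunctions

theorem eq_of_forall_lipschitz_integral_eq {X : Type*} [PseudoEMetricSpace X] [MeasurableSpace X]
    [BorelSpace X] {μ ν : Measure X} [IsFiniteMeasure μ] [IsFiniteMeasure ν]
    (h : ∀ (f : X → ℝ) (A : ℝ≥0) (B : ℝ), LipschitzWith A f → (∀ x, |f x| ≤ B) →
      ∫ x, f x ∂μ = ∫ x, f x ∂ν) : μ = ν := by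
  have hclosed : ∀ F : Set X, IsClosed F → μ F = ν F := fun F hF => by
    have hpos : ∀ n : ℕ, 0 < 1 / ((n : ℝ) + 1) := fun n => Nat.one_div_pos_of_nat
    have hlim := fun (m : Measure X) [IsFiniteMeasure m] =>
      tendsto_integral_thickenedIndicator_of_isClosed m hF hpos
        tendsto_one_div_add_atTop_nhds_zero_nat
    rw [← measureReal_eq_measureReal_iff]
    refine tendsto_nhds_unique ((hlim μ).congr fun n => ?_) (hlim ν)
    refine h _ _ 1 (fun x y => lipschitzWith_thickenedIndicator (hpos n) F x y) fun x => ?_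
    rw [NNReal.abs_eq]
    exact_mod_cast thickenedIndicator_le_one (hpos n) F x
  refine ext_of_generate_finite {s | IsClosed s} ?_ isPiSystem_isClosed hclosed
    (hclosed _ isClosed_univ)
  rw [BorelSpace.measurable_eq (α := X), borel_eq_generateFrom_isClosed]

end LipschitzTestFunctions

namespace WeightedIFS

section InvariantMeasure

variable {ι X : Type*} [Fintype ι] [MeasurableSpace X] {S : WeightedIFS ι X} {ν : Measure X}

/-- All maps and weights of the system are measurable. -/
structure IsMeasurable (S : WeightedIFS ι X) : Prop where
  map : ∀ i, Measurable (S.map i)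
  weight : ∀ i, Measurable (S.weight i)

/-- Stationarity of `ν` under one step of the random walk. -/
def IsInvariant (S : WeightedIFS ι X) (ν : Measure X) : Prop :=
  ν = ∑ i, Measure.map (S.map i) (ν.withDensity fun x => ENNReal.ofReal (S.weight i x))

namespace IsMeasurable

theorem transferOp (hS : S.IsMeasurable) {f : X → ℝ} (hf : Measurable f) :
    Measurable (S.transferOp f) :=
  Finset.measurable_fun_sum _ fun i _ => (hS.weight i).mul (hf.comp (hS.map i))

theorem transferOp_pow (hS : S.IsMeasurable) {f : X → ℝ} (hf : Measurable f) (n : ℕ) :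
    Measurable ((S.transferOp ^ n) f) := by
  induction n with
  | zero => exact hf
  | succ n ih =>
    rw [transferOp_pow_succ]
    exact hS.transferOp ih

theorem integrable_transferOp_pow [IsFiniteMeasure ν] (hS : S.IsMeasurable) {f : X → ℝ}
    (hf : Measurable f) {B : ℝ} (hB : ∀ x, |f x| ≤ B) (n : ℕ) :
    Integrable ((S.transferOp ^ n) f) ν :=
  .of_bound (hS.transferOp_pow hf n).aestronglyMeasurable B
    (.of_forall (S.abs_transferOp_pow_le hB n))

end IsMeasurable

namespace IsInvariant

theorem apply_eq (hν : S.IsInvariant ν) (hS : S.IsMeasurable) {s : Set X}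
    (hs : MeasurableSet s) :
    ν s = ∑ i, ∫⁻ x in S.map i ⁻¹' s, ENNReal.ofReal (S.weight i x) ∂ν := by
  conv_lhs => rw [hν]
  rw [Measure.finsetSum_apply]
  exact Finset.sum_congr rfl fun i _ => by
    rw [Measure.map_apply (hS.map i) hs, withDensity_apply _ (hS.map i hs)]

theorem lintegral_eq (hν : S.IsInvariant ν) (hS : S.IsMeasurable) {f : X → ℝ≥0∞}
    (hf : Measurable f) :
    ∫⁻ x, f x ∂ν = ∫⁻ x, ∑ i, ENNReal.ofReal (S.weight i x) * f (S.map i x) ∂ν := by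
  conv_lhs => rw [hν]
  rw [lintegral_finsetSum_measure]
  refine Eq.trans (Finset.sum_congr rfl fun i _ => ?_) (lintegral_finsetSum _ fun i _ =>
    (hS.weight i).ennreal_ofReal.mul (hf.comp (hS.map i))).symm
  rw [lintegral_map hf (hS.map i)]
  exact lintegral_withDensity_eq_lintegral_mul _ (hS.weight i).ennreal_ofReal
    (hf.comp (hS.map i))

theorem integral_transferOp [IsFiniteMeasure ν] (hν : S.IsInvariant ν) (hS : S.IsMeasurable)
    {f : X → ℝ} (hf : Measurable f) {B : ℝ} (hB : ∀ x, |f x| ≤ B) :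
    ∫ x, S.transferOp f x ∂ν = ∫ x, f x ∂ν := by
  have hbound : ∀ i x, |S.weight i x * f (S.map i x)| ≤ B := fun i x =>
    S.abs_weight_mul_le i x (hB _)
  have hle : ∀ i, Measure.map (S.map i) (ν.withDensity fun x => ENNReal.ofReal (S.weight i x)) ≤
      ν := fun i => by
    classical
    conv_rhs => rw [hν, ← Finset.add_sum_erase _ _ (Finset.mem_univ i)]
    exact Measure.le_add_right le_rfl
  have hfi : Integrable f ν := .of_bound hf.aestronglyMeasurable B (.of_forall hB)
  conv_rhs => rw [hν]
  rw [integral_finsetSum_measure fun i _ => hfi.mono_measure (hle i)]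
  refine (integral_finsetSum _ fun i _ => .of_bound ((hS.weight i).mul
    (hf.comp (hS.map i))).aestronglyMeasurable B (.of_forall (hbound i))).trans
      (Finset.sum_congr rfl fun i _ => ?_)
  rw [integral_map (hS.map i).aemeasurable hf.aestronglyMeasurable,
    integral_withDensity_eq_integral_toReal_smul (hS.weight i).ennreal_ofReal
      (.of_forall fun x => ENNReal.ofReal_lt_top)]
  simp only [ENNReal.toReal_ofReal (S.weight_nonneg i _), smul_eq_mul, Pi.mul_apply,
    Function.comp_apply]

theorem integral_transferOp_pow [IsFiniteMeasure ν] (hν : S.IsInvariant ν) (hS : S.IsMeasurable)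
    {f : X → ℝ} (hf : Measurable f) {B : ℝ} (hB : ∀ x, |f x| ≤ B) (n : ℕ) :
    ∫ x, (S.transferOp ^ n) f x ∂ν = ∫ x, f x ∂ν := by
  induction n with
  | zero => rfl
  | succ n ih =>
    rw [transferOp_pow_succ, hν.integral_transferOp hS (hS.transferOp_pow hf n)
      (S.abs_transferOp_pow_le hB n), ih]

theorem ae_of_ae_map (hν : S.IsInvariant ν) (hS : ∀ i, MeasurableEmbedding (S.map i))
    {q : X → Prop} (h : ∀ᵐ x ∂ν, ∀ i, q (S.map i x)) : ∀ᵐ x ∂ν, q x := by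
  rw [hν, ae_finsetSum_measure_iff]
  exact fun i _ => (hS i).ae_map_iff.2
    ((withDensity_absolutelyContinuous _ _).ae_le (h.mono fun x hx => hx i))

end IsInvariant

section Stable

variable {X : Type*} [PseudoMetricSpace X] [MeasurableSpace X] [OpensMeasurableSpace X]
  {S : WeightedIFS ι X} {ν : Measure X} [IsProbabilityMeasure ν]

theorem IsInvariant.tendsto_transferOp_pow (hν : S.IsInvariant ν) (hS : S.IsMeasurable)
    (hstable : S.IsAsymptoticallyStable) {f : X → ℝ} {A : ℝ≥0} {B : ℝ} (hf : LipschitzWith A f)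
    (hB : ∀ x, |f x| ≤ B) (x : X) :
    Tendsto (fun n => (S.transferOp ^ n) f x) atTop (𝓝 (∫ y, f y ∂ν)) := by
  have hfm : Measurable f := hf.continuous.measurable
  have hlim := tendsto_integral_of_dominated_convergence (μ := ν) (fun _ => B + B)
    (F := fun n y => (S.transferOp ^ n) f x - (S.transferOp ^ n) f y) (f := fun _ => 0)
    (fun n => (measurable_const.sub (hS.transferOp_pow hfm n)).aestronglyMeasurable)
    (integrable_const _) (fun n => .of_forall fun y => (abs_sub _ _).trans
      (add_le_add (S.abs_transferOp_pow_le hB n x) (S.abs_transferOp_pow_le hB n y)))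
    (.of_forall fun y => hstable f A B hf hB x y)
  have hint : ∀ n, ∫ y, ((S.transferOp ^ n) f x - (S.transferOp ^ n) f y) ∂ν =
      (S.transferOp ^ n) f x - ∫ y, f y ∂ν := fun n => by
    rw [integral_sub (integrable_const _) (hS.integrable_transferOp_pow hfm hB n),
      hν.integral_transferOp_pow hS hfm hB]
    simp
  simp only [hint, integral_zero] at hlim
  simpa using hlim.add_const (∫ y, f y ∂ν)

theorem IsInvariant.ae_mem_of_isClosed (hν : S.IsInvariant ν) (hS : S.IsMeasurable)
    (hstable : S.IsAsymptoticallyStable) {K : Set X} (hKc : IsClosed K) (hKne : K.Nonempty)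
    (hK : ∀ i, ∀ x ∈ K, S.map i x ∈ K) : ∀ᵐ x ∂ν, x ∈ K := by
  set f : X → ℝ := fun x => min (infDist x K) 1
  have hf0 : ∀ x, 0 ≤ f x := fun x => le_min infDist_nonneg zero_le_one
  have hf1 : ∀ x, |f x| ≤ 1 := fun x => (abs_of_nonneg (hf0 x)).trans_le (min_le_right _ _)
  have hfL : LipschitzWith 1 f := (lipschitz_infDist_pt K).min_const 1
  have hfK : Set.EqOn f 0 K := fun x hx => by simp [f, infDist_zero_of_mem hx]
  obtain ⟨x₀, hx₀⟩ := hKne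
  have hint : ∫ x, f x ∂ν = 0 :=
    tendsto_nhds_unique (hν.tendsto_transferOp_pow hS hstable hfL hf1 x₀)
      (tendsto_const_nhds.congr fun n => (S.transferOp_pow_eqOn_zero hK hfK n hx₀).symm)
  rw [integral_eq_zero_iff_of_nonneg hf0
    (.of_bound hfL.continuous.measurable.aestronglyMeasurable 1 (.of_forall hf1))] at hint
  filter_upwards [hint] with y hy
  refine (hKc.mem_iff_infDist_zero ⟨x₀, hx₀⟩).2 ?_
  rcases min_choice (infDist y K) 1 with h | h
  · exact h.symm.trans hy
  · exact absurd (h.symm.trans hy) one_ne_zero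

end Stable

end InvariantMeasure

end WeightedIFS

namespace WeightedIFS

section Coding

variable {ι X : Type*} [Fintype ι] [MeasurableSpace ι] [MeasurableSpace X]
  {S : WeightedIFS ι X} {ν : Measure X} {c : X → ι × X}

/-- Almost surely, `c` recovers from the point `S.map i x` both the index `i` and the point `x`.
The second component of `c` then plays the role of the shift map. -/
structure IsCoding (S : WeightedIFS ι X) (ν : Measure X) (c : X → ι × X) : Prop where
  measurable : Measurable c
  ae_map_eq : ∀ᵐ x ∂ν, ∀ i, c (S.map i x) = (i, x)

theorem exists_isCoding [Nonempty ι] (hS : ∀ i, MeasurableEmbedding (S.map i)) {K : Set X}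
    (hK : MeasurableSet K) (hνK : ∀ᵐ x ∂ν, x ∈ K)
    (hdisj : Pairwise fun i j => Disjoint (S.map i '' K) (S.map j '' K)) :
    ∃ c, S.IsCoding ν c := by
  choose g hg hgS using fun i => (hS i).exists_measurable_extend measurable_id fun x => ⟨x⟩
  obtain ⟨c, hc, hcg⟩ := exists_measurable_piecewise (fun i => S.map i '' K)
    (fun i => (hS i).measurableSet_image.2 hK) (fun i x => (i, g i x))
    (fun i => measurable_const.prodMk (hg i)) fun i j hij x hx =>
      ((hdisj hij).le_bot hx).elim
  refine ⟨c, hc, hνK.mono fun x hx i => ?_⟩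
  rw [hcg i (Set.mem_image_of_mem _ hx)]
  exact Prod.ext rfl (congrFun (hgS i) x)

namespace IsCoding

theorem measurable_comp [DiscreteMeasurableSpace ι] (hc : S.IsCoding ν c) {F : ι → X → ℝ}
    (hF : ∀ i, Measurable (F i)) : Measurable fun x => F (c x).1 (c x).2 :=
  (measurable_from_prod_countable_right (f := Function.uncurry F) hF).comp hc.measurable

theorem integral_comp [DiscreteMeasurableSpace ι] [IsFiniteMeasure ν] (hc : S.IsCoding ν c)
    (hν : S.IsInvariant ν) (hS : S.IsMeasurable) {F : ι → X → ℝ} (hF : ∀ i, Measurable (F i))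
    {B : ℝ} (hB : ∀ i x, |F i x| ≤ B) :
    ∫ x, F (c x).1 (c x).2 ∂ν = ∫ x, ∑ i, S.weight i x * F i x ∂ν := by
  rw [← hν.integral_transferOp hS (hc.measurable_comp hF) fun x => hB _ _]
  refine integral_congr_ae (hc.ae_map_eq.mono fun x hx => ?_)
  simp only [transferOp_apply, hx]

theorem measurePreserving (hc : S.IsCoding ν c) (hν : S.IsInvariant ν) (hS : S.IsMeasurable) :
    MeasurePreserving (fun x => (c x).2) ν ν := by
  have hT : Measurable fun x => (c x).2 := hc.measurable.snd
  refine ⟨hT, Measure.ext_of_lintegral _ fun f hf => ?_⟩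
  rw [lintegral_map hf hT, hν.lintegral_eq hS (f := fun x => f (c x).2) (hf.comp hT)]
  refine lintegral_congr_ae (hc.ae_map_eq.mono fun x hx => ?_)
  simp only [hx]
  rw [← Finset.sum_mul, ← ENNReal.ofReal_sum_of_nonneg fun i _ => S.weight_nonneg i x,
    S.sum_weight, ENNReal.ofReal_one, one_mul]

theorem setIntegral_transferOp [IsFiniteMeasure ν] (hc : S.IsCoding ν c)
    (hν : S.IsInvariant ν) (hS : S.IsMeasurable) {A : Set X} (hA : MeasurableSet A)
    (hAc : (fun x => (c x).2) ⁻¹' A = A) {f : X → ℝ} (hf : Measurable f) {B : ℝ}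
    (hB : ∀ x, |f x| ≤ B) : ∫ x in A, S.transferOp f x ∂ν = ∫ x in A, f x ∂ν := by
  have hmem : ∀ᵐ x ∂ν, ∀ i, S.map i x ∈ A ↔ x ∈ A := hc.ae_map_eq.mono fun x hx i => by
    conv_lhs => rw [← hAc, Set.mem_preimage, hx i]
  rw [← integral_indicator hA, ← integral_indicator hA,
    ← hν.integral_transferOp hS (hf.indicator hA) fun x => (norm_indicator_le_norm_self f x).trans
      (hB x)]
  refine integral_congr_ae (hmem.mono fun x hx => ?_)
  by_cases hxA : x ∈ A <;> simp [transferOp_apply, Set.indicator, hx, hxA]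

theorem setIntegral_transferOp_pow [IsFiniteMeasure ν] (hc : S.IsCoding ν c)
    (hν : S.IsInvariant ν) (hS : S.IsMeasurable) {A : Set X} (hA : MeasurableSet A)
    (hAc : (fun x => (c x).2) ⁻¹' A = A) {f : X → ℝ} (hf : Measurable f) {B : ℝ}
    (hB : ∀ x, |f x| ≤ B) (n : ℕ) :
    ∫ x in A, (S.transferOp ^ n) f x ∂ν = ∫ x in A, f x ∂ν := by
  induction n with
  | zero => rfl
  | succ n ih =>
    rw [transferOp_pow_succ, hc.setIntegral_transferOp hν hS hA hAc (hS.transferOp_pow hf n)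
      (S.abs_transferOp_pow_le hB n), ih]

end IsCoding

section Ergodic

variable {X : Type*} [PseudoMetricSpace X] [MeasurableSpace X] [BorelSpace X]
  {S : WeightedIFS ι X} {ν : Measure X} [IsProbabilityMeasure ν] {c : X → ι × X}

namespace IsCoding

theorem restrict_eq_smul (hc : S.IsCoding ν c) (hν : S.IsInvariant ν) (hS : S.IsMeasurable)
    (hstable : S.IsAsymptoticallyStable) {A : Set X} (hA : MeasurableSet A)
    (hAc : (fun x => (c x).2) ⁻¹' A = A) : ν.restrict A = ν A • ν := by
  have := ν.smul_finite (measure_ne_top ν A)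
  refine eq_of_forall_lipschitz_integral_eq fun f L B hf hB => ?_
  have hfm : Measurable f := hf.continuous.measurable
  have hlim := tendsto_integral_of_dominated_convergence (μ := ν.restrict A) (fun _ => B)
    (fun n => (hS.transferOp_pow hfm n).aestronglyMeasurable) (integrable_const _)
    (fun n => .of_forall (S.abs_transferOp_pow_le hB n))
    (.of_forall (hν.tendsto_transferOp_pow hS hstable hf hB))
  simp only [hc.setIntegral_transferOp_pow hν hS hA hAc hfm hB] at hlim
  rw [tendsto_nhds_unique tendsto_const_nhds hlim, integral_smul_measure, setIntegral_const,
    measureReal_def]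

theorem ergodic (hc : S.IsCoding ν c) (hν : S.IsInvariant ν) (hS : S.IsMeasurable)
    (hstable : S.IsAsymptoticallyStable) : Ergodic (fun x => (c x).2) ν := by
  refine ⟨hc.measurePreserving hν hS, ⟨fun A hA hAc => ?_⟩⟩
  have hzero : ν A * ν Aᶜ = 0 := by
    rw [← smul_eq_mul, ← Measure.smul_apply, ← hc.restrict_eq_smul hν hS hstable hA hAc,
      Measure.restrict_apply hA.compl, Set.compl_inter_self, measure_empty]
  rw [Filter.eventuallyConst_set]
  rcases mul_eq_zero.1 hzero with h | h
  · exact .inr (measure_eq_zero_iff_ae_notMem.1 h)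
  · exact .inl (mem_ae_iff.2 h)

end IsCoding

end Ergodic

end Coding

end WeightedIFS

theorem exp_mul_le_iff_le_mul_exp_neg {a x y : ℝ} :
    Real.exp a * x ≤ y ↔ x ≤ y * Real.exp (-a) := by
  rw [Real.exp_neg, ← div_eq_mul_inv, le_div_iff₀' (Real.exp_pos a)]

namespace WeightedIFS

section Separation

variable {ι X : Type*} [Fintype ι]

/-- The set `K` is closed, nonempty and forward invariant, and its images under distinct maps have
distance at least `R`. -/
structure IsStronglySeparated [PseudoMetricSpace X] (S : WeightedIFS ι X) (K : Set X) (R : ℝ) :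
    Prop where
  isClosed : IsClosed K
  nonempty : K.Nonempty
  mapsTo : ∀ i, Set.MapsTo (S.map i) K K
  le_dist : ∀ i j, i ≠ j → ∀ x ∈ K, ∀ y ∈ K, R ≤ dist (S.map i x) (S.map j y)

theorem isStronglySeparated_closure [PseudoMetricSpace X] {S : WeightedIFS ι X} {U : Set X}
    {R : ℝ} (hS : ∀ i, Continuous (S.map i)) (hU : U.Nonempty)
    (hmaps : ∀ i, Set.MapsTo (S.map i) U U)
    (hR : ∀ i j, i ≠ j → ∀ x ∈ U, ∀ y ∈ U, R ≤ dist (S.map i x) (S.map j y)) :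
    S.IsStronglySeparated (closure U) R where
  isClosed := isClosed_closure
  nonempty := hU.closure
  mapsTo i := (hmaps i).closure (hS i)
  le_dist i j hij x hx y hy := by
    have hclosed : IsClosed {q : X × X | R ≤ dist (S.map i q.1) (S.map j q.2)} :=
      isClosed_le continuous_const
        (((hS i).comp continuous_fst).dist ((hS j).comp continuous_snd))
    have hsub := closure_minimal (s := U ×ˢ U) (fun q hq => hR i j hij _ hq.1 _ hq.2) hclosed
    rw [closure_prod_eq] at hsub
    exact hsub (Set.mk_mem_prod hx hy)

theorem IsStronglySeparated.pairwise_disjoint [PseudoMetricSpace X] {S : WeightedIFS ι X}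
    {K : Set X} {R : ℝ} (hK : S.IsStronglySeparated K R) (hR : 0 < R) :
    Pairwise fun i j => Disjoint (S.map i '' K) (S.map j '' K) := by
  intro i j hij
  refine Set.disjoint_left.2 ?_
  rintro _ ⟨x, hx, rfl⟩ ⟨y, hy, hxy⟩
  have hle := hK.le_dist i j hij x hx y hy
  rw [hxy, dist_self] at hle
  exact hle.not_gt hR

end Separation

section LocalScaling

variable {ι X : Type*} [Fintype ι] [PseudoMetricSpace X]

/-- At small scales, uniformly in the base point, `S.map i` multiplies distances from `x` by
`exp (L i x)` up to a factor `exp η`. -/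
def HasLocalScaling (S : WeightedIFS ι X) (L : ι → X → ℝ) : Prop :=
  ∀ i, ∀ η > 0, ∀ᶠ q in uniformity X,
    Real.exp (L i q.1 - η) * dist q.1 q.2 ≤ dist (S.map i q.1) (S.map i q.2) ∧
      dist (S.map i q.1) (S.map i q.2) ≤ Real.exp (L i q.1 + η) * dist q.1 q.2

variable {S : WeightedIFS ι X} {L : ι → X → ℝ}

theorem HasLocalScaling.exists_forall_dist_le (hL : S.HasLocalScaling L)
    (hpos : ∀ i x, 0 < S.weight i x)
    (hlog : ∀ i, UniformContinuous fun x => Real.log (S.weight i x)) {η : ℝ} (hη : 0 < η) :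
    ∃ R > 0, ∀ i x y, dist x y ≤ R →
      (Real.exp (L i x - η) * dist x y ≤ dist (S.map i x) (S.map i y) ∧
        dist (S.map i x) (S.map i y) ≤ Real.exp (L i x + η) * dist x y) ∧
      Real.exp (Real.log (S.weight i x) - η) ≤ S.weight i y ∧
        S.weight i y ≤ Real.exp (Real.log (S.weight i x) + η) := by
  have hev : ∀ᶠ q in uniformity X, ∀ i, _ := eventually_all.2 fun i =>
    (hL i η hη).and ((hlog i).eventually (dist_mem_uniformity hη))
  obtain ⟨R, hR, hRq⟩ := uniformity_basis_dist_le.eventually_iff.1 hev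
  refine ⟨R, hR, fun i x y hxy => ?_⟩
  obtain ⟨hdist, hweight⟩ := hRq (x := (x, y)) hxy i
  have habs := abs_lt.1 (Real.dist_eq _ _ ▸ hweight)
  refine ⟨hdist, ?_, ?_⟩
  · rw [← Real.le_log_iff_exp_le (hpos i y)]
    linarith
  · rw [← Real.log_le_iff_le_exp (hpos i y)]
    linarith

end LocalScaling

section BallScaling

variable {ι X : Type*} [Fintype ι] [MeasurableSpace X] {S : WeightedIFS ι X} {ν : Measure X}

theorem IsInvariant.measure_le_mul (hν : S.IsInvariant ν) (hS : S.IsMeasurable) {i : ι}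
    {s t : Set X} {q : ℝ} (hs : MeasurableSet s) (hother : ∀ j ≠ i, ∀ᵐ w ∂ν, S.map j w ∉ s)
    (ht : ∀ w, S.map i w ∈ s → w ∈ t ∧ S.weight i w ≤ q) : ν s ≤ ENNReal.ofReal q * ν t := by
  have hzero : ∀ j ≠ i, ∫⁻ x in S.map j ⁻¹' s, ENNReal.ofReal (S.weight j x) ∂ν = 0 :=
    fun j hj => setLIntegral_measure_zero _ _ (measure_eq_zero_iff_ae_notMem.2 (hother j hj))
  calc ν s = ∫⁻ x in S.map i ⁻¹' s, ENNReal.ofReal (S.weight i x) ∂ν := by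
        rw [hν.apply_eq hS hs, Finset.sum_eq_single i (fun j _ => hzero j) (by simp)]
    _ ≤ ∫⁻ _ in S.map i ⁻¹' s, ENNReal.ofReal q ∂ν :=
        setLIntegral_mono measurable_const fun w hw => ENNReal.ofReal_le_ofReal (ht w hw).2
    _ ≤ ENNReal.ofReal q * ν t := by
        rw [setLIntegral_const]
        gcongr
        exact fun w hw => (ht w hw).1

theorem IsInvariant.mul_le_measure (hν : S.IsInvariant ν) (hS : S.IsMeasurable) {i : ι}
    {s t : Set X} {q : ℝ} (hs : MeasurableSet s)
    (ht : ∀ w ∈ t, S.map i w ∈ s ∧ q ≤ S.weight i w) : ENNReal.ofReal q * ν t ≤ ν s :=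
  calc ENNReal.ofReal q * ν t = ∫⁻ _ in t, ENNReal.ofReal q ∂ν := (setLIntegral_const _ _).symm
    _ ≤ ∫⁻ x in t, ENNReal.ofReal (S.weight i x) ∂ν :=
        setLIntegral_mono (hS.weight i).ennreal_ofReal fun w hw =>
          ENNReal.ofReal_le_ofReal (ht w hw).2
    _ ≤ ∫⁻ x in S.map i ⁻¹' s, ENNReal.ofReal (S.weight i x) ∂ν :=
        lintegral_mono_set fun w hw => (ht w hw).1
    _ ≤ ν s := by
        rw [hν.apply_eq hS hs]
        exact Finset.single_le_sum
          (f := fun j => ∫⁻ x in S.map j ⁻¹' s, ENNReal.ofReal (S.weight j x) ∂ν)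
          (fun j _ => zero_le) (Finset.mem_univ i)

variable {X : Type*} [MetricSpace X] [MeasurableSpace X] [BorelSpace X] [MeasurableSpace ι]
  {S : WeightedIFS ι X} {ν : Measure X} {c : X → ι × X} {L : ι → X → ℝ} {K : Set X} {R₁ M : ℝ}

/-- Only the branch `S.map i` charges a small ball around `S.map i z`, since the other branches
send `K`, which carries `ν`, to distance at least `R₁`. -/
theorem IsCoding.scalesBalls (hc : S.IsCoding ν c) (hν : S.IsInvariant ν)
    (hemb : ∀ i, MeasurableEmbedding (S.map i)) (hS : S.IsMeasurable) (hM : S.IsBilipschitz M)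
    (hR₁ : 0 < R₁) (hK : S.IsStronglySeparated K R₁) (hνK : ∀ᵐ x ∂ν, x ∈ K)
    (hL : S.HasLocalScaling L) (hLM : ∀ i x, |L i x| ≤ M) (hpos : ∀ i x, 0 < S.weight i x)
    (hlog : ∀ i, UniformContinuous fun x => Real.log (S.weight i x)) :
    ScalesBalls (fun x => (c x).2) (fun x => -L (c x).1 (c x).2)
      (fun x => -Real.log (S.weight (c x).1 (c x).2)) ν := by
  intro η hη
  obtain ⟨R₀, hR₀, hloc⟩ := hL.exists_forall_dist_le hpos hlog hη
  refine ⟨min (R₁ / 2) (R₀ * Real.exp (-M)), by positivity, hν.ae_of_ae_map hemb ?_⟩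
  filter_upwards [hc.ae_map_eq, hνK] with z hcz hzK i r hr
  have hrR₁ : r < R₁ := (hr.trans (min_le_left _ _)).trans_lt (half_lt_self hR₁)
  have hrR₀ : r ≤ R₀ * Real.exp (-M) := hr.trans (min_le_right _ _)
  simp only [hcz]
  rw [show -(-Real.log (S.weight i z) - η) = Real.log (S.weight i z) + η by ring,
    show -(-Real.log (S.weight i z) + η) = Real.log (S.weight i z) - η by ring]
  constructor
  · refine hν.measure_le_mul hS (i := i) measurableSet_closedBall (fun j hj => ?_) fun w hw => ?_
    · filter_upwards [hνK] with w hw hball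
      exact ((hK.le_dist j i hj w hw z hzK).trans (mem_closedBall.1 hball)).not_gt hrR₁
    · rw [mem_closedBall'] at hw
      have hzw : dist z w ≤ R₀ := by
        have hle := exp_mul_le_iff_le_mul_exp_neg.1 (((hM i z w).1.trans hw).trans hrR₀)
        rwa [mul_assoc, ← Real.exp_add, add_neg_cancel, Real.exp_zero, mul_one] at hle
      obtain ⟨⟨hdist, -⟩, -, hweight⟩ := hloc i z w hzw
      have hle := exp_mul_le_iff_le_mul_exp_neg.1 (hdist.trans hw)
      rw [neg_sub'] at hle
      exact ⟨mem_closedBall'.2 (by simpa using hle), hweight⟩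
  · refine hν.mul_le_measure hS measurableSet_closedBall (i := i) fun w hw => ?_
    rw [mem_closedBall', ← neg_add', ← exp_mul_le_iff_le_mul_exp_neg] at hw
    have hzw : dist z w ≤ R₀ := by
      have hexp : Real.exp (-M) ≤ Real.exp (L i z + η) :=
        Real.exp_le_exp.2 (by linarith [neg_le_of_abs_le (hLM i z)])
      have hle := (mul_le_mul_of_nonneg_right hexp dist_nonneg).trans (hw.trans hrR₀)
      exact le_of_mul_le_mul_left (hle.trans_eq (mul_comm _ _)) (Real.exp_pos _)
    obtain ⟨⟨-, hdist⟩, hweight, -⟩ := hloc i z w hzw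
    exact ⟨mem_closedBall'.2 (hdist.trans hw), hweight⟩

end BallScaling

end WeightedIFS

namespace WeightedIFS

section Dimension

variable {ι X : Type*} [Fintype ι] [MetricSpace X] [SecondCountableTopology X]
  [MeasurableSpace X] [BorelSpace X] {S : WeightedIFS ι X} {ν : Measure X}
  [IsProbabilityMeasure ν] {L : ι → X → ℝ} {K : Set X} {M R δ b : ℝ} {D : ℕ}

theorem IsCoding.dimH_eq_ofReal_div [MeasurableSpace ι] [DiscreteMeasurableSpace ι]
    {c : X → ι × X} (hc : S.IsCoding ν c) (hν : S.IsInvariant ν) (hS : S.IsMeasurable)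
    (hscale : ScalesBalls (fun x => (c x).2) (fun x => -L (c x).1 (c x).2)
      (fun x => -Real.log (S.weight (c x).1 (c x).2)) ν)
    (herg : Ergodic (fun x => (c x).2) ν) (hLm : ∀ i, Measurable (L i))
    (hLM : ∀ i x, |L i x| ≤ M) (hδ : 0 < δ) (hweight : ∀ i x, δ ≤ S.weight i x) (hb : 0 < b)
    (hLb : ∀ x, ∑ i, S.weight i x * L i x ≤ -b)
    (hD : ∀ᵐ x ∂ν, ∀ᶠ r in 𝓝[>] (0 : ℝ), ENNReal.ofReal (r ^ D) ≤ ν (closedBall x r)) :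
    lowerDimH ν = upperDimH ν ∧ upperDimH ν = ENNReal.ofReal
      ((∫ x, ∑ i, S.weight i x * Real.log (S.weight i x) ∂ν) /
        ∫ x, ∑ i, S.weight i x * L i x ∂ν) := by
  have hlog_nonpos : ∀ i x, Real.log (S.weight i x) ≤ 0 := fun i x =>
    Real.log_nonpos (S.weight_nonneg i x) (S.weight_le_one i x)
  have hlog_abs : ∀ i x, |Real.log (S.weight i x)| ≤ -Real.log δ := fun i x => by
    rw [abs_of_nonpos (hlog_nonpos i x)]
    exact neg_le_neg (Real.log_le_log hδ (hweight i x))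
  have hLc := hc.measurable_comp hLm
  have hlogc := hc.measurable_comp fun i => (hS.weight i).log
  have hLc_int : Integrable (fun x => L (c x).1 (c x).2) ν :=
    .of_bound hLc.aestronglyMeasurable M (.of_forall fun x => hLM _ _)
  have hlogc_int : Integrable (fun x => Real.log (S.weight (c x).1 (c x).2)) ν :=
    .of_bound hlogc.aestronglyMeasurable _ (.of_forall fun x => hlog_abs _ _)
  have hmean : ∫ x, L (c x).1 (c x).2 ∂ν ≤ -b := by
    rw [hc.integral_comp hν hS hLm hLM]
    refine (integral_mono (integrable_finsetSum _ fun i _ => .of_bound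
      ((hS.weight i).mul (hLm i)).aestronglyMeasurable M
      (.of_forall fun x => S.abs_weight_mul_le i x (hLM i x))) (integrable_const (-b)) hLb).trans ?_
    simp
  have hdim := hscale.dimH_eq_ofReal_div herg hLc.neg hLc_int.neg hlogc.neg hlogc_int.neg hD
    (by rw [integral_neg]; linarith)
    (integral_nonneg fun x => neg_nonneg.2 (hlog_nonpos _ _))
  rwa [integral_neg, integral_neg, neg_div_neg_eq, hc.integral_comp hν hS hLm hLM,
    hc.integral_comp hν hS (fun i => (hS.weight i).log) hlog_abs] at hdim

theorem IsInvariant.dimH_eq_ofReal_div (hν : S.IsInvariant ν)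
    (hstable : S.IsAsymptoticallyStable) (hemb : ∀ i, MeasurableEmbedding (S.map i))
    (hM : S.IsBilipschitz M) (hR : 0 < R) (hK : S.IsStronglySeparated K R)
    (hL : S.HasLocalScaling L) (hLm : ∀ i, Measurable (L i)) (hLM : ∀ i x, |L i x| ≤ M)
    (hδ : 0 < δ) (hweight : ∀ i x, δ ≤ S.weight i x)
    (hlog : ∀ i, UniformContinuous fun x => Real.log (S.weight i x)) (hb : 0 < b)
    (hLb : ∀ x, ∑ i, S.weight i x * L i x ≤ -b)
    (hD : ∀ᵐ x ∂ν, ∀ᶠ r in 𝓝[>] (0 : ℝ), ENNReal.ofReal (r ^ D) ≤ ν (closedBall x r)) :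
    lowerDimH ν = upperDimH ν ∧ upperDimH ν = ENNReal.ofReal
      ((∫ x, ∑ i, S.weight i x * Real.log (S.weight i x) ∂ν) /
        ∫ x, ∑ i, S.weight i x * L i x ∂ν) := by
  let _ : MeasurableSpace ι := ⊤
  have : Nonempty X := ⟨hK.nonempty.some⟩
  have : Nonempty ι := S.nonempty_index
  have hpos : ∀ i x, 0 < S.weight i x := fun i x => hδ.trans_le (hweight i x)
  have hS : S.IsMeasurable := ⟨fun i => (hemb i).measurable, fun i => by
    simpa only [Real.exp_log (hpos i _)] using (hlog i).continuous.measurable.exp⟩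
  have hνK := hν.ae_mem_of_isClosed hS hstable hK.isClosed hK.nonempty hK.mapsTo
  obtain ⟨c, hc⟩ := exists_isCoding hemb hK.isClosed.measurableSet hνK (hK.pairwise_disjoint hR)
  exact hc.dimH_eq_ofReal_div hν hS (hc.scalesBalls hν hemb hS hM hR hK hνK hL hLM hpos hlog)
    (hc.ergodic hν hS hstable) hLm hLM hδ hweight hb hLb hD

end Dimension

end WeightedIFS

section ConformalMap

theorem norm_apply_of_isConformalMap {E F : Type*} [NormedAddCommGroup E] [NormedSpace ℝ E]
    [Nontrivial E] [NormedAddCommGroup F] [NormedSpace ℝ F] {f : E →L[ℝ] F}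
    (hf : IsConformalMap f) (v : E) : ‖f v‖ = ‖f‖ * ‖v‖ := by
  obtain ⟨c, -, li, rfl⟩ := hf
  rw [norm_smul, li.norm_toContinuousLinearMap, mul_one, smul_apply, norm_smul,
    LinearIsometry.coe_toContinuousLinearMap, li.norm_map]

theorem dist_image_le_of_norm_fderiv_le {E F : Type*} [NormedAddCommGroup E] [NormedSpace ℝ E]
    [NormedAddCommGroup F] [NormedSpace ℝ F] {f : E → F} (hf : Differentiable ℝ f) {s : Set E}
    (hs : Convex ℝ s) {C : ℝ} (hC : ∀ x ∈ s, ‖fderiv ℝ f x‖ ≤ C) {x y : E} (hx : x ∈ s)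
    (hy : y ∈ s) : dist (f x) (f y) ≤ C * dist x y := by
  simpa only [dist_eq_norm] using
    hs.norm_image_sub_le_of_norm_fderiv_le (fun z _ => hf z) hC hy hx

variable {E : Type*} [NormedAddCommGroup E] [NormedSpace ℝ E] [Nontrivial E]

theorem norm_pos_of_isConformalMap {F : Type*} [NormedAddCommGroup F] [NormedSpace ℝ F]
    {f : E →L[ℝ] F} (hf : IsConformalMap f) : 0 < ‖f‖ :=
  norm_pos_iff.2 hf.ne_zero

theorem dist_image_le_of_log_norm_fderiv_le {F : Type*} [NormedAddCommGroup F] [NormedSpace ℝ F]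
    {f : E → F} (hf : Differentiable ℝ f) (hc : ∀ x, IsConformalMap (fderiv ℝ f x)) {s : Set E}
    (hs : Convex ℝ s) {a : ℝ} (ha : ∀ x ∈ s, Real.log ‖fderiv ℝ f x‖ ≤ a) {x y : E} (hx : x ∈ s)
    (hy : y ∈ s) : dist (f x) (f y) ≤ Real.exp a * dist x y :=
  dist_image_le_of_norm_fderiv_le hf hs
    (fun z hz => (Real.log_le_iff_le_exp (norm_pos_of_isConformalMap (hc z))).1 (ha z hz)) hx hy

theorem tendsto_log_dist_div_dist {F : Type*} [NormedAddCommGroup F] [NormedSpace ℝ F]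
    {f : E → F} {x v : E} (hf : DifferentiableAt ℝ f x) (hc : IsConformalMap (fderiv ℝ f x))
    (hv : v ≠ 0) :
    Tendsto (fun t : ℝ => Real.log (dist (f x) (f (x + t • v)) / dist x (x + t • v))) (𝓝[≠] 0)
      (𝓝 (Real.log ‖fderiv ℝ f x‖)) := by
  refine (Real.continuousAt_log (norm_pos_of_isConformalMap hc).ne').tendsto.comp ?_
  have hslope := (hasDerivAt_iff_tendsto_slope_zero.1
    (hf.hasFDerivAt.hasLineDerivAt v)).norm.div_const ‖v‖
  rw [norm_apply_of_isConformalMap hc, mul_div_cancel_right₀ _ (norm_ne_zero_iff.2 hv)] at hslope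
  refine hslope.congr fun t => ?_
  rw [zero_add, zero_smul, add_zero, norm_smul, norm_inv, dist_self_add_right, norm_smul,
    dist_eq_norm', inv_mul_eq_div, div_div]

variable [FiniteDimensional ℝ E]

theorem exists_continuousLinearEquiv_of_isConformalMap {f : E →L[ℝ] E} (hf : IsConformalMap f) :
    ∃ e : E ≃L[ℝ] E, (e : E →L[ℝ] E) = f ∧ ‖(e.symm : E →L[ℝ] E)‖ ≤ ‖f‖⁻¹ := by
  let e := (LinearEquiv.ofInjectiveEndo (f : E →ₗ[ℝ] E) hf.injective).toContinuousLinearEquiv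
  have he : ∀ v, e v = f v := fun v => rfl
  refine ⟨e, ContinuousLinearMap.ext he,
    ContinuousLinearMap.opNorm_le_bound _ (by positivity) fun w => ?_⟩
  have hnorm := norm_apply_of_isConformalMap hf (e.symm w)
  rw [← he, e.apply_symm_apply] at hnorm
  exact (le_inv_mul_iff₀ (norm_pos_of_isConformalMap hf)).2 hnorm.ge

variable {h : E → E} {M : ℝ}

theorem exists_homeomorph_of_isConformalMap_fderiv (hs : ContDiff ℝ 1 h)
    (hc : ∀ x, IsConformalMap (fderiv ℝ h x)) (hM : ∀ x, |Real.log ‖fderiv ℝ h x‖| ≤ M) :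
    ∃ Φ : E ≃ₜ E, ⇑Φ = h := by
  choose e he hesymm using fun x => exists_continuousLinearEquiv_of_isConformalMap (hc x)
  refine exists_homeomorph_of_norm_symm_le (e := e) (C := (Real.exp M).toNNReal)
    (fun x => he x ▸ (hs.contDiffAt.hasStrictFDerivAt one_ne_zero)) fun x => ?_
  rw [← NNReal.coe_le_coe, coe_nnnorm, Real.coe_toNNReal _ (Real.exp_pos M).le]
  refine (hesymm x).trans ?_
  rw [← Real.exp_log (norm_pos_of_isConformalMap (hc x)), ← Real.exp_neg]
  exact Real.exp_le_exp.2 (neg_le.1 (abs_le.1 (hM x)).1)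

theorem differentiable_symm_of_isConformalMap_fderiv {Φ : E ≃ₜ E} (hΦ : Differentiable ℝ Φ)
    (hc : ∀ x, IsConformalMap (fderiv ℝ Φ x)) :
    Differentiable ℝ Φ.symm ∧
      ∀ y, ‖fderiv ℝ Φ.symm y‖ ≤ ‖fderiv ℝ Φ (Φ.symm y)‖⁻¹ := by
  suffices ∀ y, ∃ g, HasFDerivAt Φ.symm g y ∧ ‖g‖ ≤ ‖fderiv ℝ Φ (Φ.symm y)‖⁻¹ by
    choose g hg hgle using this
    exact ⟨fun y => (hg y).differentiableAt, fun y => (hg y).fderiv ▸ hgle y⟩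
  intro y
  obtain ⟨e, he, hesymm⟩ := exists_continuousLinearEquiv_of_isConformalMap (hc (Φ.symm y))
  exact ⟨_, .of_local_left_inverse Φ.symm.continuous.continuousAt (he ▸ (hΦ _).hasFDerivAt)
    (.of_forall Φ.apply_symm_apply), hesymm⟩

section Homeomorph

variable {Φ : E ≃ₜ E} (hΦ : Differentiable ℝ Φ) (hc : ∀ x, IsConformalMap (fderiv ℝ Φ x))

include hΦ hc

theorem exp_mul_dist_le_dist_image_of_le_log_norm_fderiv {s : Set E} (hs : Convex ℝ s) {a : ℝ}
    (ha : ∀ y ∈ s, a ≤ Real.log ‖fderiv ℝ Φ (Φ.symm y)‖) {x y : E} (hx : Φ x ∈ s)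
    (hy : Φ y ∈ s) : Real.exp a * dist x y ≤ dist (Φ x) (Φ y) := by
  obtain ⟨hΦsymm, hle⟩ := differentiable_symm_of_isConformalMap_fderiv hΦ hc
  have hbound : ∀ z ∈ s, ‖fderiv ℝ Φ.symm z‖ ≤ (Real.exp a)⁻¹ := fun z hz => by
    refine (hle z).trans (inv_anti₀ (Real.exp_pos a) ?_)
    exact (Real.le_log_iff_exp_le (norm_pos_of_isConformalMap (hc _))).1 (ha z hz)
  have hdist := dist_image_le_of_norm_fderiv_le hΦsymm hs hbound hx hy
  rw [Φ.symm_apply_apply, Φ.symm_apply_apply] at hdist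
  exact (le_inv_mul_iff₀ (Real.exp_pos a)).1 hdist

theorem exp_mul_dist_le_and_dist_le (hM : ∀ x, |Real.log ‖fderiv ℝ Φ x‖| ≤ M) (x y : E) :
    Real.exp (-M) * dist x y ≤ dist (Φ x) (Φ y) ∧ dist (Φ x) (Φ y) ≤ Real.exp M * dist x y :=
  ⟨exp_mul_dist_le_dist_image_of_le_log_norm_fderiv hΦ hc convex_univ
      (fun _ _ => (abs_le.1 (hM _)).1) trivial trivial,
    dist_image_le_of_log_norm_fderiv_le hΦ hc convex_univ
      (fun _ _ => (abs_le.1 (hM _)).2) trivial trivial⟩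

theorem eventually_uniformity_dist_le (hM : ∀ x, |Real.log ‖fderiv ℝ Φ x‖| ≤ M)
    (hL : UniformContinuous fun x => Real.log ‖fderiv ℝ Φ x‖) {η : ℝ} (hη : 0 < η) :
    ∀ᶠ q in uniformity E,
      Real.exp (Real.log ‖fderiv ℝ Φ q.1‖ - η) * dist q.1 q.2 ≤ dist (Φ q.1) (Φ q.2) ∧
        dist (Φ q.1) (Φ q.2) ≤ Real.exp (Real.log ‖fderiv ℝ Φ q.1‖ + η) * dist q.1 q.2 := by
  have hbilip := exp_mul_dist_le_and_dist_le hΦ hc hM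
  obtain ⟨r, hr, hrL⟩ := Metric.uniformContinuous_iff.1 hL η hη
  have hclose : ∀ {z x}, dist z x < r → _ := fun hzx => abs_lt.1 (Real.dist_eq _ _ ▸ hrL hzx)
  have hsymm : ∀ z y, dist (Φ z) y < r * Real.exp (-M) → dist z (Φ.symm y) < r := fun z y hzy => by
    have hle := (hbilip z (Φ.symm y)).1
    rw [Φ.apply_symm_apply] at hle
    exact lt_of_mul_lt_mul_left ((hle.trans_lt hzy).trans_eq (mul_comm _ _)) (Real.exp_pos _).le
  have hnear : ∀ᶠ q in uniformity E, dist (Φ q.1) (Φ q.2) < r * Real.exp (-M) :=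
    (LipschitzWith.of_dist_le' fun x y => (hbilip x y).2).uniformContinuous.eventually
      (dist_mem_uniformity (by positivity))
  filter_upwards [dist_mem_uniformity hr, hnear] with ⟨z, w⟩ hzw hΦzw
  constructor
  · refine exp_mul_dist_le_dist_image_of_le_log_norm_fderiv hΦ hc
      (convex_ball (Φ z) (r * Real.exp (-M))) (fun y hy => ?_) (mem_ball_self (by positivity))
      (mem_ball'.2 hΦzw)
    linarith [(hclose (hsymm z y (mem_ball'.1 hy))).2]
  · refine dist_image_le_of_log_norm_fderiv_le hΦ hc (convex_ball z r) (fun x hx => ?_)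
      (mem_ball_self hr) (mem_ball'.2 hzw)
    linarith [(hclose (mem_ball'.1 hx)).1]

end Homeomorph

end ConformalMap

namespace WeightedIFS

section Conformal

variable {ι E : Type*} [Fintype ι] [NormedAddCommGroup E] [NormedSpace ℝ E] [Nontrivial E]
  {S : WeightedIFS ι E} {b : ℝ}

theorem ContractsOnAverage.sum_log_norm_fderiv_le (hb : S.ContractsOnAverage b)
    (hS : ∀ i, Differentiable ℝ (S.map i)) (hc : ∀ i x, IsConformalMap (fderiv ℝ (S.map i) x))
    (x : E) : ∑ i, S.weight i x * Real.log ‖fderiv ℝ (S.map i) x‖ ≤ -b := by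
  obtain ⟨v, hv⟩ := exists_ne (0 : E)
  refine le_of_tendsto (tendsto_finsetSum _ fun i _ =>
    (tendsto_log_dist_div_dist (hS i x) (hc i x) hv).const_mul _) ?_
  filter_upwards [self_mem_nhdsWithin] with t ht
  exact (hb x (x + t • v) (left_ne_add.2 (smul_ne_zero ht hv))).le

theorem measurableEmbedding_of_isConformalMap_fderiv [FiniteDimensional ℝ E] [MeasurableSpace E]
    [BorelSpace E] {M : ℝ} (hS : ∀ i, ContDiff ℝ 1 (S.map i))
    (hc : ∀ i x, IsConformalMap (fderiv ℝ (S.map i) x))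
    (hM : ∀ i x, |Real.log ‖fderiv ℝ (S.map i) x‖| ≤ M) (i : ι) :
    MeasurableEmbedding (S.map i) := by
  obtain ⟨Φ, hΦ⟩ := exists_homeomorph_of_isConformalMap_fderiv (hS i) (hc i) (hM i)
  exact hΦ ▸ Φ.measurableEmbedding

variable [FiniteDimensional ℝ E] {M : ℝ}

theorem isBilipschitz_of_isConformalMap_fderiv (hS : ∀ i, ContDiff ℝ 1 (S.map i))
    (hc : ∀ i x, IsConformalMap (fderiv ℝ (S.map i) x))
    (hM : ∀ i x, |Real.log ‖fderiv ℝ (S.map i) x‖| ≤ M) : S.IsBilipschitz M := by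
  intro i
  obtain ⟨Φ, hΦ⟩ := exists_homeomorph_of_isConformalMap_fderiv (hS i) (hc i) (hM i)
  rw [← hΦ]
  exact exp_mul_dist_le_and_dist_le (hΦ ▸ (hS i).differentiable one_ne_zero) (hΦ ▸ hc i)
    (hΦ ▸ hM i)

theorem hasLocalScaling_log_norm_fderiv (hS : ∀ i, ContDiff ℝ 1 (S.map i))
    (hc : ∀ i x, IsConformalMap (fderiv ℝ (S.map i) x))
    (hM : ∀ i x, |Real.log ‖fderiv ℝ (S.map i) x‖| ≤ M)
    (hL : ∀ i, UniformContinuous fun x => Real.log ‖fderiv ℝ (S.map i) x‖) :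
    S.HasLocalScaling fun i x => Real.log ‖fderiv ℝ (S.map i) x‖ := by
  intro i η hη
  obtain ⟨Φ, hΦ⟩ := exists_homeomorph_of_isConformalMap_fderiv (hS i) (hc i) (hM i)
  simp only [← hΦ]
  exact eventually_uniformity_dist_le (hΦ ▸ (hS i).differentiable one_ne_zero) (hΦ ▸ hc i)
    (hΦ ▸ hM i) (hΦ ▸ hL i) hη

end Conformal

end WeightedIFS

theorem lipschitzOnWith_log {δ : ℝ≥0} (hδ : 0 < δ) : LipschitzOnWith δ⁻¹ Real.log (Set.Ici δ) := by
  refine (convex_Ici _).lipschitzOnWith_of_nnnorm_deriv_le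
    (fun x hx => Real.differentiableAt_log ((NNReal.coe_pos.2 hδ).trans_le hx).ne') fun x hx => ?_
  rw [Real.deriv_log, nnnorm_inv]
  exact inv_anti₀ hδ (NNReal.coe_le_coe.1 (hx.trans (le_abs_self x)))

theorem dimH_invariant_measure_SOSC_general {ι V : Type*} [Fintype ι] [NormedAddCommGroup V]
    [NormedSpace ℝ V] [FiniteDimensional ℝ V] [Nontrivial V] [MeasurableSpace V] [BorelSpace V]
    {α : ℝ≥0} (hα : 0 < α) {h : ι → V → V} {p : ι → V → ℝ} (hsmooth : ∀ i, ContDiff ℝ 1 (h i))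
    (hlog : ∀ i, UniformContinuous fun x => Real.log ‖fderiv ℝ (h i) x‖)
    (hlogbdd : ∃ M : ℝ, ∀ i x, |Real.log ‖fderiv ℝ (h i) x‖| ≤ M)
    (hpholder : ∀ i, MemHolder α (p i)) (hpbelow : ∃ δ > (0 : ℝ), ∀ i x, δ ≤ p i x)
    (hpsum : ∀ x, ∑ i, p i x = 1)
    (hcoa : ∃ b > (0 : ℝ), ∀ x y, x ≠ y →
      ∑ j, p j x * Real.log (dist (h j x) (h j y) / dist x y) < -b)
    (hconf : ∀ i x, IsConformalMap (fderiv ℝ (h i) x))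
    (hsep : ∃ U : Set V, U.Nonempty ∧ (∀ i, h i '' U ⊆ U) ∧ ∃ R > (0 : ℝ), ∀ i j, i ≠ j →
      ∀ a ∈ h i '' U, ∀ b ∈ h j '' U, R ≤ dist a b)
    {ν : Measure V} [IsProbabilityMeasure ν]
    (hinv : ν = ∑ i, Measure.map (h i) (ν.withDensity fun x => ENNReal.ofReal (p i x))) :
    lowerDimH ν = upperDimH ν ∧ upperDimH ν = ENNReal.ofReal
      ((∫ x, ∑ i, p i x * Real.log (p i x) ∂ν) /
        ∫ x, ∑ i, p i x * Real.log ‖fderiv ℝ (h i) x‖ ∂ν) := by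
  obtain ⟨M, hM⟩ := hlogbdd
  obtain ⟨δ, hδ, hpδ⟩ := hpbelow
  obtain ⟨b, hb, hcoa⟩ := hcoa
  obtain ⟨U, hU, hmaps, R, hR, hdist⟩ := hsep
  let S : WeightedIFS ι V := ⟨h, p, fun i x => hδ.le.trans (hpδ i x), hpsum⟩
  have hcontr : S.ContractsOnAverage b := hcoa
  have hbilip : S.IsBilipschitz M :=
    WeightedIFS.isBilipschitz_of_isConformalMap_fderiv hsmooth hconf hM
  have hstable := hcontr.isAsymptoticallyStable hb hbilip hα hpholder hδ hpδ
  have hK : S.IsStronglySeparated (closure U) R :=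
    WeightedIFS.isStronglySeparated_closure (fun i => (hsmooth i).continuous) hU
      (fun i => Set.mapsTo_iff_image_subset.2 (hmaps i)) fun i j hij x hx y hy =>
        hdist i j hij _ (Set.mem_image_of_mem _ hx) _ (Set.mem_image_of_mem _ hy)
  have hlogp : ∀ i, UniformContinuous fun x => Real.log (p i x) := fun i => by
    lift δ to ℝ≥0 using hδ.le
    obtain ⟨C, hC⟩ := hpholder i
    exact uniformContinuousOn_univ.1 ((lipschitzOnWith_log hδ).uniformContinuousOn.comp
      (hC.uniformContinuous hα).uniformContinuousOn fun x _ => hpδ i x)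
  exact WeightedIFS.IsInvariant.dimH_eq_ofReal_div (S := S) hinv hstable
    (WeightedIFS.measurableEmbedding_of_isConformalMap_fderiv hsmooth hconf hM) hbilip hR hK
    (WeightedIFS.hasLocalScaling_log_norm_fderiv hsmooth hconf hM hlog)
    (fun i => (hlog i).continuous.measurable) hM hδ hpδ hlogp hb
    (hcontr.sum_log_norm_fderiv_le (fun i => (hsmooth i).differentiable one_ne_zero) hconf)
    (ae_eventually_pow_le_measure_closedBall ν)

/-- For a conformal contracting-on-average IFS satisfying the strong open set condition,
the Hausdorff dimension of the invariant measure exists and is given by the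
Eckmann–Ruelle formula. -/
theorem dimH_invariant_measure_SOSC
    (d k : ℕ) (hd : 1 ≤ d) (hk : 2 ≤ k) (α : ℝ≥0) (hα0 : 0 < α) (hα1 : α ≤ 1)
    (h : Fin k → EuclideanSpace ℝ (Fin d) → EuclideanSpace ℝ (Fin d))
    (p : Fin k → EuclideanSpace ℝ (Fin d) → ℝ)
    -- the maps are C¹ with α-Hölder, uniformly bounded logarithmic derivative
    (hsmooth : ∀ i, ContDiff ℝ 1 (h i))
    (hholder : ∀ i, ∃ C : ℝ≥0, HolderWith C α fun x => Real.log ‖fderiv ℝ (h i) x‖)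
    (hlogbdd : ∃ M : ℝ, ∀ i x, |Real.log ‖fderiv ℝ (h i) x‖| ≤ M)
    -- the probabilities are α-Hölder, with values in (0,1), uniformly bounded away from 0
    (hpholder : ∀ i, ∃ C : ℝ≥0, HolderWith C α (p i))
    (hprange : ∀ i x, p i x ∈ Set.Ioo (0 : ℝ) 1)
    (hpbelow : ∃ δ > (0 : ℝ), ∀ i x, δ ≤ p i x)
    (hpsum : ∀ x, ∑ i, p i x = 1)
    -- contraction on average
    (hcoa : ∃ b > (0 : ℝ), ∀ x y, x ≠ y →
      ∑ j, p j x * Real.log (dist (h j x) (h j y) / dist x y) < -b)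
    -- conformality of the maps
    (hconf : ∀ i x, IsConformalMap (fderiv ℝ (h i) x))
    -- strong open set condition
    (hSOSC : ∃ U : Set (EuclideanSpace ℝ (Fin d)), U.Nonempty ∧ IsOpen U ∧
      (∀ i, h i '' U ⊆ U) ∧
      ∃ R₁ > (0 : ℝ), ∀ i j, i ≠ j →
        ∀ a ∈ h i '' U, ∀ b ∈ h j '' U, R₁ ≤ dist a b)
    -- the (unique) invariant probability measure
    (ν : Measure (EuclideanSpace ℝ (Fin d))) [IsProbabilityMeasure ν]
    (hinv : ν = ∑ i, Measure.map (h i)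
      (ν.withDensity fun x => ENNReal.ofReal (p i x))) :
    lowerDimH ν = upperDimH ν ∧
    upperDimH ν = ENNReal.ofReal
      ((∫ x, ∑ i, p i x * Real.log (p i x) ∂ν) /
        (∫ x, ∑ i, p i x * Real.log ‖fderiv ℝ (h i) x‖ ∂ν)) := by
  have : Nonempty (Fin d) := ⟨⟨0, hd⟩⟩
  obtain ⟨U, hU, -, hsep⟩ := hSOSC
  exact dimH_invariant_measure_SOSC_general hα0 hsmooth
    (fun i => (hholder i).choose_spec.uniformContinuous hα0) hlogbdd hpholder hpbelow hpsum hcoa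
    hconf ⟨U, hU, hsep⟩ hinv
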